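/- arXiv:1111.1498 — 11 statements merged into one kernel-verified Lean document; each statement's English description precedes it below -/
import Mathlib

section
/- Let P be a finite partially ordered set, F a field, n : P → ℕ, and M a square block matrix indexed by Σ i : P, Fin (n i) with entries in F that lies in the block incidence algebra I(P). Then M is invertible (a unit of the matrix ring) if and only if for every i ∈ P the diagonal block M_ii is invertible. Moreover, when M is invertible its inverse M⁻¹ also lies in I(P), and for every i ∈ P the diagonal block (M⁻¹)_ii equals (M_ii)⁻¹. -/
/-- A block matrix, with rows indexed by `Σ i : P, Fin (n i)` and columns by
`Σ j : P, Fin (m j)`, lies in the block incidence algebra of the poset `P` if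
the block `M_{ij}` vanishes whenever `¬ (j ≤ i)`. -/
def BlockIncidence {P : Type*} [PartialOrder P] {R : Type*} [Zero R] {n m : P → ℕ}
    (M : Matrix (Σ i : P, Fin (n i)) (Σ j : P, Fin (m j)) R) : Prop :=
  ∀ (i : P) (a : Fin (n i)) (j : P) (b : Fin (m j)), ¬ (j ≤ i) → M ⟨i, a⟩ ⟨j, b⟩ = 0

/-- The `i`-th diagonal block of a square block matrix. -/
def diagBlock {P : Type*} {R : Type*} {n : P → ℕ}
    (M : Matrix (Σ i : P, Fin (n i)) (Σ j : P, Fin (n j)) R) (i : P) :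
    Matrix (Fin (n i)) (Fin (n i)) R :=
  Matrix.of fun a b => M ⟨i, a⟩ ⟨i, b⟩

/-!
Each condition `x.1 ≤ i` cuts the indices of `M` into two parts, and `M` lies in the incidence
algebra exactly when it is block triangular for all of these cuts; closure under inverses is thus
inherited from block triangular matrices. Since every `k ≠ i` fails one of `k ≤ i` and `i ≤ k`,
taking the `i`-th diagonal block is multiplicative on the incidence algebra. Finally, a linear
extension of the order makes `M` block triangular with the blocks `M_ii` on its diagonal, so
`det M` is the product of their determinants.
-/

section Zero

variable {P R : Type*} [PartialOrder P] [Zero R] {n : P → ℕ}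
  {M : Matrix (Σ i : P, Fin (n i)) (Σ j : P, Fin (n j)) R}

theorem BlockIncidence.blockTriangular (hM : BlockIncidence M) {α : Type*} [Preorder α]
    {e : P → α} (he : Antitone e) : M.BlockTriangular fun x => e x.1 :=
  fun x y hlt => hM x.1 x.2 y.1 y.2 fun hle => (he hle).not_gt hlt

theorem blockIncidence_iff_forall_blockTriangular :
    BlockIncidence M ↔ ∀ i : P, M.BlockTriangular fun x => x.1 ≤ i := by
  constructor
  · exact fun hM i => hM.blockTriangular (antitone_le (x := i))
  · intro hM i a j b hji
    exact hM i (show (j ≤ i) < (i ≤ i) by simp [hji, lt_iff_le_not_ge])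

end Zero

theorem diagBlock_one {P R : Type*} [DecidableEq P] [Zero R] [One R] {n : P → ℕ} (i : P) :
    diagBlock (1 : Matrix (Σ i : P, Fin (n i)) (Σ j : P, Fin (n j)) R) i = 1 :=
  Matrix.submatrix_one _ sigma_mk_injective

theorem BlockIncidence.diagBlock_mul {P R : Type*} [PartialOrder P] [Fintype P]
    [NonUnitalNonAssocSemiring R] {n : P → ℕ}
    {A B : Matrix (Σ i : P, Fin (n i)) (Σ j : P, Fin (n j)) R}
    (hA : BlockIncidence A) (hB : BlockIncidence B) (i : P) :
    diagBlock (A * B) i = diagBlock A i * diagBlock B i := by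
  ext a b
  simp only [diagBlock, Matrix.of_apply, Matrix.mul_apply, Fintype.sum_sigma]
  refine Fintype.sum_eq_single i fun k hki => Finset.sum_eq_zero fun c _ => ?_
  by_cases hle : k ≤ i
  · rw [hB k c i b fun hge => hki (hle.antisymm hge), mul_zero]
  · rw [hA i a k c hle, zero_mul]

section CommRing

variable {P R : Type*} [DecidableEq P] [CommRing R] {n : P → ℕ}

theorem det_toSquareBlock_eq_det_diagBlock [Fintype P] {α : Type*} [DecidableEq α] {e : P → α}
    (he : Function.Injective e) (M : Matrix (Σ i : P, Fin (n i)) (Σ j : P, Fin (n j)) R) (i : P) :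
    (M.toSquareBlock (fun x => e x.1) (e i)).det = (diagBlock M i).det := by
  let block : {x : Σ j : P, Fin (n j) // e x.1 = e i} ≃ Fin (n i) :=
    (Equiv.subtypeEquivRight fun _ => he.eq_iff).trans (Equiv.sigmaSubtype i)
  exact (Matrix.det_submatrix_equiv_self block.symm _).symm

variable [PartialOrder P] [Fintype P] {M : Matrix (Σ i : P, Fin (n i)) (Σ j : P, Fin (n j)) R}

theorem BlockIncidence.det_eq_prod (hM : BlockIncidence M) :
    M.det = ∏ i : P, (diagBlock M i).det := by
  -- `LinearExtension P` is a type synonym of `P`, and `toLinearExtension` is the identity map.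
  let e : P ≃ (LinearExtension P)ᵒᵈ :=
    Equiv.ofBijective (fun i => OrderDual.toDual (toLinearExtension i)) Function.bijective_id
  have he : Antitone e := toLinearExtension.monotone
  let : Fintype (LinearExtension P)ᵒᵈ := Fintype.ofEquiv P e
  calc
    M.det = ∏ k, (M.toSquareBlock (fun x => e x.1) k).det := (hM.blockTriangular he).det_fintype
    _ = ∏ i : P, (M.toSquareBlock (fun x => e x.1) (e i)).det := (e.prod_comp _).symm
    _ = ∏ i : P, (diagBlock M i).det :=
      Fintype.prod_congr _ _ (det_toSquareBlock_eq_det_diagBlock e.injective M)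

theorem BlockIncidence.isUnit_iff (hM : BlockIncidence M) :
    IsUnit M ↔ ∀ i : P, IsUnit (diagBlock M i) := by
  simp only [Matrix.isUnit_iff_isUnit_det, hM.det_eq_prod, IsUnit.prod_univ_iff]

theorem BlockIncidence.inv (hM : BlockIncidence M) (hu : IsUnit M) : BlockIncidence M⁻¹ := by
  let := hu.invertible
  rw [blockIncidence_iff_forall_blockTriangular] at hM ⊢
  exact fun i => Matrix.blockTriangular_inv_of_blockTriangular (hM i)

theorem BlockIncidence.diagBlock_inv (hM : BlockIncidence M) (hu : IsUnit M) (i : P) :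
    diagBlock M⁻¹ i = (diagBlock M i)⁻¹ := by
  refine (Matrix.inv_eq_right_inv ?_).symm
  calc
    diagBlock M i * diagBlock M⁻¹ i = diagBlock (M * M⁻¹) i :=
      (hM.diagBlock_mul (hM.inv hu) i).symm
    _ = 1 := by
      rw [Matrix.mul_nonsing_inv M ((Matrix.isUnit_iff_isUnit_det M).mp hu), diagBlock_one]

end CommRing

theorem blockIncidence_isUnit_iff_general {P : Type*} [PartialOrder P] [Fintype P] [DecidableEq P]
    {R : Type*} [CommRing R] (n : P → ℕ)
    (M : Matrix (Σ i : P, Fin (n i)) (Σ j : P, Fin (n j)) R)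
    (hM : BlockIncidence M) :
    (IsUnit M ↔ ∀ i : P, IsUnit (diagBlock M i)) ∧
    (IsUnit M →
      BlockIncidence M⁻¹ ∧ ∀ i : P, diagBlock M⁻¹ i = (diagBlock M i)⁻¹) :=
  ⟨hM.isUnit_iff, fun hu => ⟨hM.inv hu, hM.diagBlock_inv hu⟩⟩

/-- A block matrix in the incidence algebra of a poset over a field is invertible iff all
its diagonal blocks are invertible; moreover, its inverse is again in the incidence algebra
and the diagonal blocks of the inverse are the inverses of the diagonal blocks. -/
theorem blockIncidence_isUnit_iff {P : Type*} [PartialOrder P] [Fintype P] [DecidableEq P]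
    {F : Type*} [Field F] (n : P → ℕ)
    (M : Matrix (Σ i : P, Fin (n i)) (Σ j : P, Fin (n j)) F)
    (hM : BlockIncidence M) :
    (IsUnit M ↔ ∀ i : P, IsUnit (diagBlock M i)) ∧
    (IsUnit M →
      BlockIncidence M⁻¹ ∧ ∀ i : P, diagBlock M⁻¹ i = (diagBlock M i)⁻¹) :=
  blockIncidence_isUnit_iff_general n M hM
end

section
/- Let P be a finite partially ordered set, F a field, and M : Matrix P P F a matrix with M i j = 0 whenever ¬ (j ≤ i) and with M i i ≠ 0 for every i ∈ P (so M is invertible). Then for every i ∈ P one has (M⁻¹) i i = (M i i)⁻¹, and for all i ≠ j one has (M⁻¹) i j = (M i i)⁻¹ * S(i,j), where S(i,j) is the sum, over all finite strictly increasing chains j = c₀ < c₁ < ⋯ < c_m = i (m ≥ 1) in P, of the products ∏_{t=0}^{m-1} ( − M c_{t+1} c_t * (M c_t c_t)⁻¹ ). In particular (M⁻¹) i j = 0 whenever ¬ (j ≤ i), since then no such chain exists. -/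
/-- The product `∏_{t=0}^{m-1} (− M c_{t+1} c_t * (M c_t c_t)⁻¹)` associated to a
list `[c₀, c₁, …, c_m]` of elements of `P`. -/
def chainProd {P : Type*} {F : Type*} [Field F] (M : Matrix P P F) : List P → F
  | [] => 1
  | [_] => 1
  | a :: b :: rest => (-M b a * (M a a)⁻¹) * chainProd M (b :: rest)

/-!
Let `T i j` be the sum of the chain products over all strictly increasing chains from `j` to `i`,
the one-element chain contributing `1` when `i = j`. Splitting a chain at its second element `k`
gives `T i j = ∑ k ∈ (j, i], -M k j * (M j j)⁻¹ * T i k` for `i ≠ j`. Multiplied by `M j j`, this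
says that the off-diagonal entries of `T * M` vanish; its diagonal entries are those of `M`. Hence
`M⁻¹` is `T` with each row `i` divided by `M i i`.
-/

section StrictChains

variable {P : Type*} [Preorder P] {a b : P} {l : List P}

/-- The strictly increasing chains `a = c₀ < c₁ < ⋯ < c_m = b`, encoded as lists. The trivial
chain `[a]` with `m = 0` is included when `a = b`. -/
def strictChains (a b : P) : Set (List P) :=
  {l | l.IsChain (· < ·) ∧ l.head? = some a ∧ l.getLast? = some b}

theorem cons_mem_strictChains : a :: l ∈ strictChains a b ↔
    (l = [] ∧ a = b) ∨ ∃ c, a < c ∧ l ∈ strictChains c b := by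
  cases l <;> simp [strictChains, and_assoc]

theorem mem_Icc_of_mem_strictChains (hl : l ∈ strictChains a b) {x : P} (hx : x ∈ l) :
    x ∈ Set.Icc a b := by
  obtain ⟨hchain, hhead, hlast⟩ := hl
  have hsorted : l.Pairwise (· ≤ ·) := hchain.pairwise.imp le_of_lt
  constructor
  · simpa [List.head_of_head?_eq_some hhead] using hsorted.rel_head hx
  · simpa [List.getLast_of_getLast?_eq_some hlast] using hsorted.rel_getLast hx

theorem le_of_mem_strictChains (hl : l ∈ strictChains a b) : a ≤ b :=
  (mem_Icc_of_mem_strictChains hl (List.mem_of_mem_head? hl.2.1)).2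

theorem strictChains_eq_empty (hab : ¬ a ≤ b) : strictChains a b = ∅ :=
  Set.eq_empty_of_forall_notMem fun _ hl => hab (le_of_mem_strictChains hl)

theorem strictChains_self (a : P) : strictChains a a = {[a]} := by
  ext l
  constructor
  · intro hl
    obtain ⟨l, rfl⟩ := List.head?_eq_some_iff.1 hl.2.1
    rcases cons_mem_strictChains.1 hl with ⟨rfl, -⟩ | ⟨c, hac, hl⟩
    · rfl
    · exact absurd (le_of_mem_strictChains hl) hac.not_ge
  · rintro rfl
    exact cons_mem_strictChains.2 (.inl ⟨rfl, rfl⟩)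

theorem strictChains_of_ne (hab : a ≠ b) :
    strictChains a b = ⋃ c ∈ Set.Ioc a b, List.cons a '' strictChains c b := by
  ext l
  simp only [Set.mem_iUnion, Set.mem_image, exists_prop]
  constructor
  · intro hl
    obtain ⟨l, rfl⟩ := List.head?_eq_some_iff.1 hl.2.1
    rcases cons_mem_strictChains.1 hl with ⟨-, h⟩ | ⟨c, hac, hl⟩
    · exact absurd h hab
    · exact ⟨c, ⟨hac, le_of_mem_strictChains hl⟩, l, hl, rfl⟩
  · rintro ⟨c, hc, l, hl, rfl⟩
    exact cons_mem_strictChains.2 (.inr ⟨c, hc.1, hl⟩)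

theorem strictChains_eq_setOf_two_le_length (hab : a ≠ b) :
    strictChains a b = {l | l.IsChain (· < ·) ∧ l.head? = some a ∧ l.getLast? = some b ∧
      2 ≤ l.length} := by
  ext l
  refine ⟨fun hl => ⟨hl.1, hl.2.1, hl.2.2, ?_⟩, fun ⟨hchain, hhead, hlast, _⟩ =>
    ⟨hchain, hhead, hlast⟩⟩
  obtain ⟨-, hhead, hlast⟩ := hl
  match l with
  | [x] => simp_all
  | _ :: _ :: _ => simp

theorem pairwiseDisjoint_cons_image_strictChains (a b : P) (s : Set P) :
    s.PairwiseDisjoint fun c => List.cons a '' strictChains c b := by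
  intro c _ c' _ hne
  rw [Function.onFun, Set.disjoint_image_iff List.cons_injective, Set.disjoint_left]
  intro l hl hl'
  exact hne (Option.some.inj (hl.2.1.symm.trans hl'.2.1))

theorem finite_strictChains [LocallyFiniteOrder P] (a b : P) : (strictChains a b).Finite := by
  classical
  refine Set.Finite.of_injOn (f := List.toFinset) (t := ↑(Finset.Icc a b).powerset) ?_ ?_
    (Finset.finite_toSet _)
  · intro l hl
    simpa [Set.subset_def] using fun x hx => mem_Icc_of_mem_strictChains hl hx
  · intro l hl l' hl' heq
    have hsorted := hl.1.pairwise
    have hsorted' := hl'.1.pairwise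
    exact (List.perm_of_nodup_nodup_toFinset_eq hsorted.nodup hsorted'.nodup heq).eq_of_pairwise
      (fun _ _ _ _ h h' => absurd h' h.asymm) hsorted hsorted'

end StrictChains

section ChainSum

variable {P : Type*} {F : Type*} [Field F]

theorem chainProd_cons (M : Matrix P P F) (a : P) {c : P} {l : List P} (hl : l.head? = some c) :
    chainProd M (a :: l) = -M c a * (M a a)⁻¹ * chainProd M l := by
  obtain ⟨l, rfl⟩ := List.head?_eq_some_iff.1 hl
  rfl

/-- The matrix whose entry at `i j` is the sum of `chainProd M` over all strictly increasing chains
from `j` to `i`. Off the diagonal this is `S(i,j)`; the trivial chains make its diagonal entries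
equal to `1`. -/
noncomputable def chainSum [Preorder P] (M : Matrix P P F) : Matrix P P F :=
  .of fun i j => ∑ᶠ l ∈ strictChains j i, chainProd M l

section Preorder

variable [Preorder P] (M : Matrix P P F) {i j : P}

theorem chainSum_apply (i j : P) :
    chainSum M i j = ∑ᶠ l ∈ strictChains j i, chainProd M l :=
  rfl

theorem chainSum_self (i : P) : chainSum M i i = 1 := by
  rw [chainSum_apply, strictChains_self, finsum_mem_singleton, chainProd]

theorem chainSum_eq_zero (h : ¬ j ≤ i) : chainSum M i j = 0 := by
  rw [chainSum_apply, strictChains_eq_empty h, finsum_mem_empty]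

theorem chainSum_of_ne [LocallyFiniteOrder P] (hij : i ≠ j) :
    chainSum M i j = ∑ k ∈ Finset.Ioc j i, -M k j * (M j j)⁻¹ * chainSum M i k := by
  rw [chainSum_apply, strictChains_of_ne hij.symm,
    finsum_mem_biUnion (pairwiseDisjoint_cons_image_strictChains j i _) (Set.finite_Ioc j i)
      fun k _ => (finite_strictChains k i).image _,
    ← Finset.coe_Ioc, finsum_mem_coe_finset]
  refine Finset.sum_congr rfl fun k _ => ?_
  rw [finsum_mem_image List.cons_injective.injOn,
    finsum_mem_congr rfl fun l hl => chainProd_cons M j hl.2.1]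
  exact (mul_finsum_mem ..).symm

end Preorder

section PartialOrder

variable [PartialOrder P] [DecidableEq P] {M : Matrix P P F}

theorem sum_Icc_chainSum_mul [LocallyFiniteOrder P] (hdiag : ∀ i, M i i ≠ 0) (i j : P) :
    ∑ k ∈ Finset.Icc j i, chainSum M i k * M k j = Matrix.diagonal M.diag i j := by
  rcases eq_or_ne i j with rfl | hij
  · simp [chainSum_self]
  rw [Matrix.diagonal_apply_ne _ hij]
  by_cases hji : j ≤ i
  · have hcancel : chainSum M i j * M j j = -∑ k ∈ Finset.Ioc j i, chainSum M i k * M k j := by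
      rw [chainSum_of_ne M hij, Finset.sum_mul, ← Finset.sum_neg_distrib]
      refine Finset.sum_congr rfl fun k _ => ?_
      field [hdiag j]
    rw [← Finset.sum_Ioc_add_eq_sum_Icc hji, hcancel, add_neg_cancel]
  · rw [Finset.Icc_eq_empty hji, Finset.sum_empty]

variable [Fintype P]

theorem chainSum_mul (hM : ∀ i j, ¬ j ≤ i → M i j = 0) (hdiag : ∀ i, M i i ≠ 0) :
    chainSum M * M = Matrix.diagonal M.diag := by
  classical
  let _ : LocallyFiniteOrder P := Fintype.toLocallyFiniteOrder
  ext i j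
  rw [Matrix.mul_apply, ← sum_Icc_chainSum_mul hdiag]
  refine (Finset.sum_subset (Finset.subset_univ _) fun k _ hk => ?_).symm
  by_cases hjk : j ≤ k
  · have hki : ¬ k ≤ i := fun hki => hk (Finset.mem_Icc.2 ⟨hjk, hki⟩)
    rw [chainSum_eq_zero M hki, zero_mul]
  · rw [hM k j hjk, mul_zero]

theorem diagonal_inv_mul_chainSum_mul (hM : ∀ i j, ¬ j ≤ i → M i j = 0)
    (hdiag : ∀ i, M i i ≠ 0) :
    Matrix.diagonal (fun i => (M i i)⁻¹) * chainSum M * M = 1 := by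
  rw [Matrix.mul_assoc, chainSum_mul hM hdiag, Matrix.diagonal_mul_diagonal,
    ← Matrix.diagonal_one]
  exact congrArg Matrix.diagonal (funext fun i => inv_mul_cancel₀ (hdiag i))

theorem inv_apply_eq_inv_mul_chainSum (hM : ∀ i j, ¬ j ≤ i → M i j = 0)
    (hdiag : ∀ i, M i i ≠ 0) (i j : P) :
    M⁻¹ i j = (M i i)⁻¹ * chainSum M i j := by
  rw [Matrix.inv_eq_left_inv (diagonal_inv_mul_chainSum_mul hM hdiag), Matrix.diagonal_mul]

end PartialOrder

end ChainSum

/-- Explicit formula for the inverse of a matrix in the incidence algebra of a finite poset: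
the diagonal entries of the inverse are the inverses of the diagonal entries, and the
off-diagonal entry `(M⁻¹) i j` equals `(M i i)⁻¹` times the sum, over all strictly
increasing chains `j = c₀ < c₁ < ⋯ < c_m = i` (with `m ≥ 1`), of the products
`∏_t (− M c_{t+1} c_t * (M c_t c_t)⁻¹)`.  In particular `(M⁻¹) i j = 0` whenever
`¬ (j ≤ i)`. -/
theorem incidence_inv_formula {P : Type*} [PartialOrder P] [Fintype P] [DecidableEq P]
    {F : Type*} [Field F] (M : Matrix P P F)
    (hsp : ∀ i j : P, ¬ (j ≤ i) → M i j = 0)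
    (hdiag : ∀ i : P, M i i ≠ 0) :
    IsUnit M ∧
    (∀ i : P, M⁻¹ i i = (M i i)⁻¹) ∧
    (∀ i j : P, i ≠ j →
      M⁻¹ i j = (M i i)⁻¹ *
        ∑ᶠ l ∈ {l : List P | l.Chain' (· < ·) ∧ l.head? = some j ∧
            l.getLast? = some i ∧ 2 ≤ l.length},
          chainProd M l) ∧
    (∀ i j : P, ¬ (j ≤ i) → M⁻¹ i j = 0) := by
  have hinv := inv_apply_eq_inv_mul_chainSum hsp hdiag
  refine ⟨.of_mul_eq_one_right _ (diagonal_inv_mul_chainSum_mul hsp hdiag), fun i => ?_,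
    fun i j hij => ?_, fun i j hji => ?_⟩
  · rw [hinv, chainSum_self, mul_one]
  · rw [hinv, chainSum_apply, strictChains_eq_setOf_two_le_length hij.symm]
    rfl
  · rw [hinv, chainSum_eq_zero M hji, mul_zero]
end

section
/- Let P be a finite partially ordered set, n, m : P → ℕ, N : ℕ, and let (A_K, B_K, C_K, D_K) be real matrices of sizes N×N, N×(Σ j, n j), (Σ i, m i)×N, and (Σ i, m i)×(Σ j, n j) respectively. Suppose the transfer function K = C_K' * (X • 1 − A_K')⁻¹ * B_K' + D_K' over RatFunc ℝ satisfies K (i,a) (j,b) = 0 whenever ¬ (j ≤ i). Then there exist N' : ℕ, a labeling σ : Fin N' → P, and real matrices A', B', C', D' of sizes N'×N', N'×(Σ j, n j), (Σ i, m i)×N', and (Σ i, m i)×(Σ j, n j) with the same transfer function (i.e. C'' * (X • 1 − A'')⁻¹ * B'' + D'' = K over RatFunc ℝ) such that A' a b = 0 whenever ¬ (σ b ≤ σ a), B' a (j,c) = 0 whenever ¬ (j ≤ σ a), C' (i,c) b = 0 whenever ¬ (σ b ≤ i), and D' (i,c) (j,d) = 0 whenever ¬ (j ≤ i); that is, the controller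 admits a realization in which all four state-space matrices are block lower triangular with respect to the poset. -/
set_option synthInstance.maxHeartbeats 1000000

/-- The transfer function `C (X·1 − A)⁻¹ B + D` of the realization `(A, B, C, D)`,
a matrix over the field of rational functions. -/
noncomputable def transferFn {F : Type*} [Field F] {N m q : Type*} [Fintype N] [DecidableEq N]
    (A : Matrix N N F) (B : Matrix N m F) (C : Matrix q N F) (D : Matrix q m F) :
    Matrix q m (RatFunc F) :=
  C.map RatFunc.C * ((RatFunc.X : RatFunc F) • (1 : Matrix N N (RatFunc F)) -
    A.map RatFunc.C)⁻¹ * B.map RatFunc.C + D.map RatFunc.C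

/-!
Replicate the state space once for every input label `p`, so that the copies evolve independently.
Let an input with label `p` drive only copy `p`, and let an output with label `q` read only the
copies with `p ≤ q`. The signal from that input to that output is then the original one if `p ≤ q`
and zero otherwise: the transfer function has been truncated to the incidence pattern. A
poset-causal transfer function agrees with its truncation.
-/

open scoped Kronecker

open scoped Classical in
/-- The matrix that agrees with `M` at the positions `(i, j)` with `p i j` and is zero elsewhere:
the truncation of `M` to the sparsity pattern `p`. -/
noncomputable def mask {m n R : Type*} [Zero R] (p : m → n → Prop) (M : Matrix m n R) :
    Matrix m n R :=
  Matrix.of fun i j => if p i j then M i j else 0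

section Mask

variable {m n R S : Type*} {p : m → n → Prop}

theorem mask_apply_of_not [Zero R] (M : Matrix m n R) {i : m} {j : n} (h : ¬ p i j) :
    mask p M i j = 0 :=
  if_neg h

theorem mask_eq_self [Zero R] {M : Matrix m n R} (h : ∀ i j, ¬ p i j → M i j = 0) :
    mask p M = M := by
  ext i j
  by_cases hij : p i j
  · exact if_pos hij
  · rw [mask_apply_of_not M hij, h i j hij]

theorem mask_add [AddZeroClass R] (M M' : Matrix m n R) :
    mask p (M + M') = mask p M + mask p M' := by
  ext i j
  by_cases hij : p i j <;> simp [mask, hij]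

theorem mask_map [Zero R] [Zero S] (f : R → S) (hf : f 0 = 0) (M : Matrix m n R) :
    (mask p M).map f = mask p (M.map f) := by
  ext i j
  by_cases hij : p i j <;> simp [mask, hij, hf]

end Mask

section Replication

variable {Q N N' ι κ R S : Type*} (u : ι → Q) (r : Q → κ → Prop)

/-- The input matrix on the state space `Q × N`, consisting of one copy of `N` per label, in which
the input `i` drives only the copy labeled `u i`. -/
noncomputable def routedInput [Zero R] (B : Matrix N ι R) : Matrix (Q × N) ι R :=
  mask (fun s i => s.1 = u i) (B.submatrix Prod.snd id)

/-- The output matrix on the state space `Q × N`, consisting of one copy of `N` per label, in which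
the output `k` reads only the copies whose label `q` satisfies `r q k`. -/
noncomputable def gatedOutput [Zero R] (C : Matrix κ N R) : Matrix κ (Q × N) R :=
  mask (fun k s => r s.1 k) (C.submatrix id Prod.snd)

theorem routedInput_map [Zero R] [Zero S] (f : R → S) (hf : f 0 = 0) (B : Matrix N ι R) :
    (routedInput u B).map f = routedInput u (B.map f) :=
  mask_map f hf _

theorem gatedOutput_map [Zero R] [Zero S] (f : R → S) (hf : f 0 = 0) (C : Matrix κ N R) :
    (gatedOutput r C).map f = gatedOutput r (C.map f) :=
  mask_map f hf _

theorem gatedOutput_mul_one_kronecker [NonAssocSemiring R] [Fintype Q] [DecidableEq Q] [Fintype N]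
    (C : Matrix κ N R) (M : Matrix N N' R) :
    gatedOutput r C * ((1 : Matrix Q Q R) ⊗ₖ M) = gatedOutput r (C * M) := by
  ext k ⟨q, b⟩
  by_cases h : r q k <;>
    simp [gatedOutput, mask, Matrix.mul_apply, Fintype.sum_prod_type_right, Matrix.one_apply, h]

theorem gatedOutput_mul_routedInput [NonUnitalNonAssocSemiring R] [Fintype Q] [Fintype N]
    (C : Matrix κ N R) (B : Matrix N ι R) :
    gatedOutput r C * routedInput u B = mask (fun k i => r (u i) k) (C * B) := by
  classical
  ext k i
  by_cases h : r (u i) k <;>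
    simp [gatedOutput, routedInput, mask, Matrix.mul_apply, Fintype.sum_prod_type_right, h]

end Replication

namespace transferFn

variable {F N ι κ : Type*} [Field F] [Fintype N] [DecidableEq N]

/-- The resolvent `(X·1 − A)⁻¹` of `A` over the field of rational functions. Mathlib's `resolvent`
is a function of a scalar, whereas here the spectral parameter is the indeterminate. -/
noncomputable def resolvent (A : Matrix N N F) : Matrix N N (RatFunc F) :=
  ((RatFunc.X : RatFunc F) • (1 : Matrix N N (RatFunc F)) - A.map RatFunc.C)⁻¹

theorem eq_mul_resolvent_mul_add
    (A : Matrix N N F) (B : Matrix N ι F) (C : Matrix κ N F) (D : Matrix κ ι F) :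
    transferFn A B C D =
      C.map RatFunc.C * resolvent A * B.map RatFunc.C + D.map RatFunc.C :=
  rfl

theorem resolvent_submatrix_equiv {N' : Type*} [Fintype N'] [DecidableEq N'] (e : N' ≃ N)
    (A : Matrix N N F) :
    resolvent (A.submatrix e e) = (resolvent A).submatrix e e := by
  rw [resolvent, resolvent, ← Matrix.inv_submatrix_equiv]
  simp [Matrix.submatrix_sub, Matrix.submatrix_smul, Matrix.submatrix_map]

theorem resolvent_one_kronecker {Q : Type*} [Fintype Q] [DecidableEq Q] (A : Matrix N N F) :
    resolvent ((1 : Matrix Q Q F) ⊗ₖ A) = (1 : Matrix Q Q (RatFunc F)) ⊗ₖ resolvent A := by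
  have pencil_eq : (RatFunc.X : RatFunc F) • (1 : Matrix (Q × N) (Q × N) (RatFunc F)) -
      ((1 : Matrix Q Q F) ⊗ₖ A).map RatFunc.C =
        (1 : Matrix Q Q (RatFunc F)) ⊗ₖ
          ((RatFunc.X : RatFunc F) • (1 : Matrix N N (RatFunc F)) - A.map RatFunc.C) := by
    ext ⟨p, a⟩ ⟨q, b⟩
    by_cases hpq : p = q <;> simp [Matrix.one_apply, hpq]
  rw [resolvent, pencil_eq, Matrix.inv_kronecker, inv_one, resolvent]

theorem submatrix_equiv {N' : Type*} [Fintype N'] [DecidableEq N'] (e : N' ≃ N)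
    (A : Matrix N N F) (B : Matrix N ι F) (C : Matrix κ N F) (D : Matrix κ ι F) :
    transferFn (A.submatrix e e) (B.submatrix e id) (C.submatrix id e) D =
      transferFn A B C D := by
  simp only [eq_mul_resolvent_mul_add, resolvent_submatrix_equiv, ← Matrix.submatrix_map,
    Matrix.submatrix_mul_equiv, Matrix.submatrix_id_id]

theorem one_kronecker_routedInput_gatedOutput {Q : Type*} [Fintype Q] [DecidableEq Q]
    (u : ι → Q) (r : Q → κ → Prop)
    (A : Matrix N N F) (B : Matrix N ι F) (C : Matrix κ N F) (D : Matrix κ ι F) :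
    transferFn ((1 : Matrix Q Q F) ⊗ₖ A) (routedInput u B) (gatedOutput r C)
        (mask (fun k i => r (u i) k) D) =
      mask (fun k i => r (u i) k) (transferFn A B C D) := by
  simp only [eq_mul_resolvent_mul_add, routedInput_map u _ (map_zero RatFunc.C),
    gatedOutput_map r _ (map_zero RatFunc.C), mask_map _ (map_zero RatFunc.C),
    resolvent_one_kronecker, gatedOutput_mul_one_kronecker, gatedOutput_mul_routedInput, mask_add]

end transferFn

theorem posetCausal_controller_triangular_realization_general
    {F P N ι κ : Type*} [Field F] [Fintype N] [DecidableEq N]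
    (r : P → P → Prop) [Std.Refl r] (u : ι → P) (y : κ → P) (hu : (Set.range u).Finite)
    (A : Matrix N N F) (B : Matrix N ι F) (C : Matrix κ N F) (D : Matrix κ ι F)
    (hK : ∀ k i, ¬ r (u i) (y k) → transferFn A B C D k i = 0) :
    ∃ (N' : ℕ) (σ : Fin N' → P)
      (A' : Matrix (Fin N') (Fin N') F) (B' : Matrix (Fin N') ι F)
      (C' : Matrix κ (Fin N') F) (D' : Matrix κ ι F),
      transferFn A' B' C' D' = transferFn A B C D ∧
      (∀ a b, ¬ r (σ b) (σ a) → A' a b = 0) ∧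
      (∀ a i, ¬ r (u i) (σ a) → B' a i = 0) ∧
      (∀ k b, ¬ r (σ b) (y k) → C' k b = 0) ∧
      (∀ k i, ¬ r (u i) (y k) → D' k i = 0) := by
  classical
  have := hu.fintype
  let e : Fin (Fintype.card (Set.range u × N)) ≃ Set.range u × N := (Fintype.equivFin _).symm
  let label : ι → Set.range u := Set.rangeFactorization u
  let reads : Set.range u → κ → Prop := fun q k => r q (y k)
  refine ⟨_, fun a => (e a).1, ((1 : Matrix _ _ F) ⊗ₖ A).submatrix e e,
    (routedInput label B).submatrix e id, (gatedOutput reads C).submatrix id e,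
    mask (fun k i => reads (label i) k) D, ?_, fun a b h => ?_, fun a i h => ?_,
    fun k b h => mask_apply_of_not _ h, fun k i h => mask_apply_of_not _ h⟩
  · rw [transferFn.submatrix_equiv, transferFn.one_kronecker_routedInput_gatedOutput]
    exact mask_eq_self hK
  · have hne : (e a).1 ≠ (e b).1 := fun hab => h (of_eq (congrArg Subtype.val hab.symm))
    simp [Matrix.one_apply_ne hne]
  · have hne : (e a).1 ≠ label i := fun hai => h (of_eq (congrArg Subtype.val hai.symm))
    exact mask_apply_of_not _ hne

/-- Every controller whose transfer function is poset-causal (lies in the block incidence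
algebra of the poset `P`) admits a state-space realization in which all four matrices
`(A', B', C', D')` are block lower triangular with respect to a labeling `σ` of the
controller states by elements of the poset. -/
theorem posetCausal_controller_triangular_realization
    {P : Type*} [PartialOrder P] [Fintype P] [DecidableEq P]
    (n m : P → ℕ) (N : ℕ)
    (A_K : Matrix (Fin N) (Fin N) ℝ)
    (B_K : Matrix (Fin N) (Σ j : P, Fin (n j)) ℝ)
    (C_K : Matrix (Σ i : P, Fin (m i)) (Fin N) ℝ)
    (D_K : Matrix (Σ i : P, Fin (m i)) (Σ j : P, Fin (n j)) ℝ)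
    (hK : ∀ (i : P) (a : Fin (m i)) (j : P) (b : Fin (n j)), ¬ (j ≤ i) →
      transferFn A_K B_K C_K D_K ⟨i, a⟩ ⟨j, b⟩ = 0) :
    ∃ (N' : ℕ) (σ : Fin N' → P)
      (A' : Matrix (Fin N') (Fin N') ℝ)
      (B' : Matrix (Fin N') (Σ j : P, Fin (n j)) ℝ)
      (C' : Matrix (Σ i : P, Fin (m i)) (Fin N') ℝ)
      (D' : Matrix (Σ i : P, Fin (m i)) (Σ j : P, Fin (n j)) ℝ),
      transferFn A' B' C' D' = transferFn A_K B_K C_K D_K ∧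
      (∀ a b : Fin N', ¬ (σ b ≤ σ a) → A' a b = 0) ∧
      (∀ (a : Fin N') (j : P) (c : Fin (n j)), ¬ (j ≤ σ a) → B' a ⟨j, c⟩ = 0) ∧
      (∀ (i : P) (c : Fin (m i)) (b : Fin N'), ¬ (σ b ≤ i) → C' ⟨i, c⟩ b = 0) ∧
      (∀ (i : P) (c : Fin (m i)) (j : P) (d : Fin (n j)), ¬ (j ≤ i) → D' ⟨i, c⟩ ⟨j, d⟩ = 0) := by
  obtain ⟨N', σ, A', B', C', D', hT, hA, hB, hC, hD⟩ :=
    posetCausal_controller_triangular_realization_general (· ≤ ·) Sigma.fst Sigma.fst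
      (Set.toFinite _) A_K B_K C_K D_K fun ⟨i, a⟩ ⟨j, b⟩ => hK i a j b
  exact ⟨N', σ, A', B', C', D', hT, hA, fun a j c => hB a ⟨j, c⟩, fun i c => hC ⟨i, c⟩,
    fun i c j d => hD ⟨i, c⟩ ⟨j, d⟩⟩
end

section
/- Let F be a field and let A, B, C, D be matrices over F of sizes N×N, N×m, q×N, and q×m respectively. Then the transfer function C' * (X • 1 − A')⁻¹ * B' + D' over RatFunc F is the zero matrix if and only if D = 0 and C * A^k * B = 0 for every natural number k. -/
/-!
At infinity, `(X • 1 - A)⁻¹ = ∑ k, X⁻¹ ^ (k + 1) • A ^ k` is a geometric series, so the transfer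
function expands as `D + ∑ k, X⁻¹ ^ (k + 1) • (C * A ^ k * B)`. Sending `X` to the inverse of the
Laurent variable embeds the rational functions into the Laurent series, where coefficients can be
compared.
-/

set_option synthInstance.maxHeartbeats 1000000

open PowerSeries LaurentSeries

section LaurentAtInfty

variable (F : Type*) [Field F]

open scoped IntermediateField in
/-- The substitution `X ↦ X⁻¹` in rational functions. -/
noncomputable def ratFuncInvX : RatFunc F →ₐ[F] RatFunc F :=
  F⟮(RatFunc.X⁻¹ : RatFunc F)⟯.val.comp (RatFunc.algEquivOfTranscendental RatFunc.X⁻¹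
    (IsAlgebraic.inv_iff.not.mpr RatFunc.transcendental_X)).toAlgHom

theorem ratFuncInvX_X : ratFuncInvX F RatFunc.X = RatFunc.X⁻¹ :=
  RatFunc.algEquivOfTranscendental_X _ _

open scoped RatFunc in
/-- The Laurent expansion at infinity of a rational function. The variable of the Laurent series
stands for the local parameter `X⁻¹`. -/
noncomputable def laurentAtInfty : RatFunc F →+* F⸨X⸩ :=
  (algebraMap (RatFunc F) F⸨X⸩).comp (ratFuncInvX F).toRingHom

theorem laurentAtInfty_X : laurentAtInfty F RatFunc.X = HahnSeries.single (-1) 1 := by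
  simp [laurentAtInfty, ratFuncInvX_X, RatFunc.coe_X]

theorem laurentAtInfty_C (a : F) : laurentAtInfty F (RatFunc.C a) = (PowerSeries.C a : F⟦X⟧) := by
  calc laurentAtInfty F (RatFunc.C a)
    _ = (RatFunc.C a : RatFunc F) := by simp [laurentAtInfty, ← RatFunc.algebraMap_eq_C]
    _ = (PowerSeries.C a : F⟦X⟧) := by
      rw [← RatFunc.algebraMap_C, ← Polynomial.coe_C]
      exact (RatFunc.coe_coe _).symm

end LaurentAtInfty

theorem map_matrix_inv {n K L : Type*} [Fintype n] [DecidableEq n] [Field K] [Field L]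
    (f : K →+* L) (M : Matrix n n K) : M⁻¹.map f = (M.map f)⁻¹ := by
  simp only [Matrix.inv_def, Ring.inverse_eq_inv', ← RingHom.mapMatrix_apply, ← RingHom.map_det,
    ← RingHom.map_adjugate, ← map_inv₀]
  ext
  simp

section MarkovSeries

variable {N m q R : Type*} [Fintype N] [DecidableEq N]

/-- The geometric series `∑ k, X ^ k • A ^ k` as a matrix of power series. -/
noncomputable def matrixGeomSeries [Semiring R] (A : Matrix N N R) : Matrix N N R⟦X⟧ :=
  .of fun i j => .mk fun k => (A ^ k) i j

theorem one_sub_X_smul_mul_matrixGeomSeries [Ring R] (A : Matrix N N R) :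
    (1 - (X : R⟦X⟧) • A.map PowerSeries.C) * matrixGeomSeries A = 1 := by
  ext i j k
  rw [sub_mul, one_mul, Matrix.smul_mul, Matrix.sub_apply, Matrix.smul_apply, smul_eq_mul, map_sub]
  cases k with
  | zero => by_cases h : i = j <;> simp [matrixGeomSeries, Matrix.one_apply, h]
  | succ k =>
    by_cases h : i = j <;>
      simp [matrixGeomSeries, pow_succ', Matrix.mul_apply, Matrix.one_apply, coeff_one, h]

variable [Semiring R]

/-- The power series `D + ∑ k, X ^ (k + 1) • (C * A ^ k * B)` whose coefficients are the Markov
parameters of the realization `(A, B, C, D)`. -/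
noncomputable def markovSeries (A : Matrix N N R) (B : Matrix N m R) (C : Matrix q N R)
    (D : Matrix q m R) : Matrix q m R⟦X⟧ :=
  C.map PowerSeries.C * ((X : R⟦X⟧) • matrixGeomSeries A) * B.map PowerSeries.C +
    D.map PowerSeries.C

variable (A : Matrix N N R) (B : Matrix N m R) (C : Matrix q N R) (D : Matrix q m R)

theorem coeff_zero_markovSeries (i : q) (j : m) :
    coeff 0 (markovSeries A B C D i j) = D i j := by
  simp [markovSeries, Matrix.mul_apply]

theorem coeff_succ_markovSeries (k : ℕ) (i : q) (j : m) :
    coeff (k + 1) (markovSeries A B C D i j) = (C * A ^ k * B) i j := by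
  simp [markovSeries, matrixGeomSeries, Matrix.mul_apply]

theorem markovSeries_eq_zero_iff :
    markovSeries A B C D = 0 ↔ D = 0 ∧ ∀ k : ℕ, C * A ^ k * B = 0 := by
  refine ⟨fun h => ⟨?_, fun k => ?_⟩, fun ⟨hD, hM⟩ => ?_⟩
  · ext i j
    rw [← coeff_zero_markovSeries A B C D, h, Matrix.zero_apply, map_zero, Matrix.zero_apply]
  · ext i j
    rw [← coeff_succ_markovSeries A B C D, h, Matrix.zero_apply, map_zero, Matrix.zero_apply]
  · ext i j (_ | k)
    · rw [coeff_zero_markovSeries, hD, Matrix.zero_apply, Matrix.zero_apply, map_zero]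
    · rw [coeff_succ_markovSeries, hM, Matrix.zero_apply, Matrix.zero_apply, map_zero]

end MarkovSeries

section TransferFn

variable {F N m q : Type*} [Field F] [DecidableEq N]

theorem map_laurentAtInfty_map_C (M : Matrix m q F) :
    (M.map RatFunc.C).map (laurentAtInfty F) =
      (M.map PowerSeries.C).map (HahnSeries.ofPowerSeries ℤ F) :=
  Matrix.ext fun i j => laurentAtInfty_C F (M i j)

theorem map_laurentAtInfty_X_smul_one_sub (A : Matrix N N F) :
    ((RatFunc.X : RatFunc F) • (1 : Matrix N N (RatFunc F)) - A.map RatFunc.C).map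
        (laurentAtInfty F) =
      HahnSeries.single (-1) (1 : F) •
        (1 - (X : F⟦X⟧) • A.map PowerSeries.C).map (HahnSeries.ofPowerSeries ℤ F) := by
  simp only [Matrix.map_sub _ (map_sub _), Matrix.map_smul' _ _ _ (map_mul _),
    Matrix.map_one _ (map_zero _) (map_one _), map_laurentAtInfty_map_C, laurentAtInfty_X,
    HahnSeries.ofPowerSeries_X, smul_sub, smul_smul, HahnSeries.single_mul_single]
  simp

theorem map_laurentAtInfty_X_smul_one_sub_inv [Fintype N] (A : Matrix N N F) :
    ((RatFunc.X : RatFunc F) • (1 : Matrix N N (RatFunc F)) - A.map RatFunc.C)⁻¹.map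
        (laurentAtInfty F) =
      ((X : F⟦X⟧) • matrixGeomSeries A).map (HahnSeries.ofPowerSeries ℤ F) := by
  rw [map_matrix_inv, map_laurentAtInfty_X_smul_one_sub]
  refine Matrix.inv_eq_right_inv ?_
  rw [Matrix.map_smul' _ _ _ (map_mul _), smul_mul_smul_comm, ← Matrix.map_mul,
    one_sub_X_smul_mul_matrixGeomSeries, Matrix.map_one _ (map_zero _) (map_one _),
    HahnSeries.ofPowerSeries_X, HahnSeries.single_mul_single]
  simp

theorem map_laurentAtInfty_transferFn [Fintype N] (A : Matrix N N F) (B : Matrix N m F)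
    (C : Matrix q N F) (D : Matrix q m F) :
    (transferFn A B C D).map (laurentAtInfty F) =
      (markovSeries A B C D).map (HahnSeries.ofPowerSeries ℤ F) := by
  simp only [transferFn, markovSeries, Matrix.map_mul, Matrix.map_add _ (map_add _),
    map_laurentAtInfty_map_C, map_laurentAtInfty_X_smul_one_sub_inv]

theorem transferFn_eq_zero_iff_general [Fintype N] (A : Matrix N N F) (B : Matrix N m F)
    (C : Matrix q N F) (D : Matrix q m F) :
    transferFn A B C D = 0 ↔ D = 0 ∧ ∀ k : ℕ, C * A ^ k * B = 0 := by
  have hφ : Function.Injective (laurentAtInfty F) := (laurentAtInfty F).injective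
  have hι : Function.Injective (HahnSeries.ofPowerSeries ℤ F) := HahnSeries.ofPowerSeries_injective
  rw [← markovSeries_eq_zero_iff, ← (Matrix.map_injective hφ).eq_iff,
    ← (Matrix.map_injective hι).eq_iff, map_laurentAtInfty_transferFn,
    Matrix.map_zero _ (map_zero _), Matrix.map_zero _ (map_zero _)]

end TransferFn

/-- The transfer function of a realization `(A, B, C, D)` is the zero matrix if and only if
`D = 0` and all Markov parameters `C A^k B` vanish. -/
theorem transferFn_eq_zero_iff {F : Type*} [Field F] {N m q : ℕ}
    (A : Matrix (Fin N) (Fin N) F) (B : Matrix (Fin N) (Fin m) F)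
    (C : Matrix (Fin q) (Fin N) F) (D : Matrix (Fin q) (Fin m) F) :
    transferFn A B C D = 0 ↔ D = 0 ∧ ∀ k : ℕ, C * A ^ k * B = 0 :=
  transferFn_eq_zero_iff_general A B C D
end

section
/- Let P be a finite partially ordered set, n : P → ℕ, and M a real square block matrix indexed by Σ i : P, Fin (n i) lying in the block incidence algebra I(P). Then M is Hurwitz if and only if for every i ∈ P the diagonal block M_ii is Hurwitz. -/
/-- A real square matrix is Hurwitz if every complex eigenvalue has negative real part. -/
def IsHurwitz {k : Type*} [Fintype k] [DecidableEq k] (M : Matrix k k ℝ) : Prop :=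
  ∀ z ∈ spectrum ℂ (M.map (algebraMap ℝ ℂ)), z.re < 0

/-!
Along a linear extension of the poset, a matrix of the incidence algebra is block triangular, so
its determinant is the product of the determinants of its diagonal blocks. It is therefore
invertible exactly when all of these blocks are, and applying this to `z - M`, which lies in the
incidence algebra again, shows that the spectrum of `M` is the union of the spectra of its
diagonal blocks.
-/

open Matrix

/-- The matrix `M` lies in the incidence algebra of the poset `P` with respect to the assignment
`b` of indices to blocks: the `(p, q)` block vanishes unless `q ≤ p`. This is `BlockIncidence`
for arbitrary index types, with `b` in place of the first projection of a sigma type. -/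
def IncidenceTriangular {P k R : Type*} [LE P] [Zero R] (M : Matrix k k R) (b : k → P) : Prop :=
  ∀ i j, ¬ b j ≤ b i → M i j = 0

theorem det_toSquareBlock_comp {k α β R : Type*} [Fintype k] [DecidableEq k] [DecidableEq α]
    [DecidableEq β] [CommRing R] {f : α → β} (hf : f.Injective) (M : Matrix k k R) (b : k → α)
    (a : α) : (M.toSquareBlock (f ∘ b) (f a)).det = (M.toSquareBlock b a).det :=
  det_submatrix_equiv_self (Equiv.subtypeEquivRight fun _ => hf.eq_iff) (M.toSquareBlock b a)

namespace IncidenceTriangular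

variable {P k A : Type*}

theorem map {R S F : Type*} [LE P] {b : k → P} [Zero R] [Zero S] [FunLike F R S]
    [ZeroHomClass F R S] {M : Matrix k k R} (hM : IncidenceTriangular M b) (f : F) :
    IncidenceTriangular (M.map f) b := fun i j hij => by
  rw [map_apply, hM i j hij, map_zero]

theorem algebraMap_sub {R : Type*} [Preorder P] {b : k → P} [Fintype k] [DecidableEq k]
    [Ring A] [CommSemiring R] [Algebra R A] {M : Matrix k k A} (hM : IncidenceTriangular M b)
    (r : R) : IncidenceTriangular (algebraMap R (Matrix k k A) r - M) b := fun i j hij => by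
  have hne : i ≠ j := fun h => hij (h ▸ le_rfl)
  rw [Matrix.sub_apply, hM i j hij, algebraMap_matrix_apply, if_neg hne, sub_zero]

variable [PartialOrder P] {b : k → P}

theorem blockTriangular_toLinearExtension {R : Type*} [Zero R] {M : Matrix k k R}
    (hM : IncidenceTriangular M b) :
    M.BlockTriangular (OrderDual.toDual ∘ toLinearExtension ∘ b) := fun i j hij =>
  hM i j fun hle => (OrderDual.toDual_lt_toDual.mp hij).not_ge (toLinearExtension.monotone hle)

variable [Fintype k] [DecidableEq k] [DecidableEq P] [CommRing A] {M : Matrix k k A}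

theorem det (hM : IncidenceTriangular M b) :
    M.det = ∏ p ∈ Finset.univ.image b, (M.toSquareBlock b p).det := by
  classical
  let f : P → (LinearExtension P)ᵒᵈ := OrderDual.toDual ∘ toLinearExtension
  have hf : f.Injective := fun _ _ h => h
  calc M.det = ∏ c ∈ Finset.univ.image (f ∘ b), (M.toSquareBlock (f ∘ b) c).det :=
        hM.blockTriangular_toLinearExtension.det
    _ = ∏ p ∈ Finset.univ.image b, (M.toSquareBlock (f ∘ b) (f p)).det := by
        rw [← Finset.image_image, Finset.prod_image hf.injOn]
    _ = ∏ p ∈ Finset.univ.image b, (M.toSquareBlock b p).det :=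
        Finset.prod_congr rfl fun p _ => det_toSquareBlock_comp hf M b p

theorem isUnit_iff_forall_isUnit_toSquareBlock (hM : IncidenceTriangular M b) :
    IsUnit M ↔ ∀ p, IsUnit (M.toSquareBlock b p) := by
  have isUnit_of_notMem_image (p : P) (hp : p ∉ Finset.univ.image b) :
      IsUnit (M.toSquareBlock b p) := by
    have : IsEmpty {i // b i = p} :=
      ⟨fun i => hp (Finset.mem_image.mpr ⟨i, Finset.mem_univ _, i.2⟩)⟩
    exact isUnit_of_subsingleton _
  simp only [isUnit_iff_isUnit_det M, hM.det, IsUnit.prod_iff, ← isUnit_iff_isUnit_det]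
  refine ⟨fun h p => ?_, fun h p _ => h p⟩
  by_cases hp : p ∈ Finset.univ.image b
  · exact h p hp
  · exact isUnit_of_notMem_image p hp

theorem spectrum_eq_iUnion_toSquareBlock {R : Type*} [CommSemiring R] [Algebra R A]
    (hM : IncidenceTriangular M b) :
    spectrum R M = ⋃ p, spectrum R (M.toSquareBlock b p) := by
  ext r
  have toSquareBlock_sub (p : P) : (algebraMap R (Matrix k k A) r - M).toSquareBlock b p =
      algebraMap R _ r - M.toSquareBlock b p := by
    ext i j
    simp only [toSquareBlock_def, of_apply, Matrix.sub_apply, algebraMap_matrix_apply,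
      Subtype.ext_iff]
  simp only [Set.mem_iUnion, spectrum.mem_iff, not_forall, toSquareBlock_sub,
    (hM.algebraMap_sub r).isUnit_iff_forall_isUnit_toSquareBlock]

end IncidenceTriangular

theorem isHurwitz_reindex_iff {k l : Type*} [Fintype k] [DecidableEq k] [Fintype l]
    [DecidableEq l] (e : k ≃ l) (M : Matrix k k ℝ) :
    IsHurwitz (reindex e e M) ↔ IsHurwitz M := by
  have hspec : spectrum ℂ ((reindex e e M).map (algebraMap ℝ ℂ)) =
      spectrum ℂ (M.map (algebraMap ℝ ℂ)) :=
    AlgEquiv.spectrum_eq (reindexAlgEquiv ℂ ℂ e) (M.map (algebraMap ℝ ℂ))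
  rw [IsHurwitz, hspec, IsHurwitz]

theorem isHurwitz_toSquareBlock_fst_iff {P : Type*} [Fintype P] [DecidableEq P] {n : P → ℕ}
    (M : Matrix (Σ i : P, Fin (n i)) (Σ j : P, Fin (n j)) ℝ) (i : P) :
    IsHurwitz (M.toSquareBlock Sigma.fst i) ↔ IsHurwitz (diagBlock M i) :=
  (isHurwitz_reindex_iff (Equiv.sigmaSubtype i) _).symm

theorem blockIncidence_isHurwitz_iff_general {P k : Type*} [PartialOrder P] [DecidableEq P]
    [Fintype k] [DecidableEq k] {b : k → P} {M : Matrix k k ℝ} (hM : IncidenceTriangular M b) :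
    IsHurwitz M ↔ ∀ p, IsHurwitz (M.toSquareBlock b p) := by
  have hspec : spectrum ℂ (M.map (algebraMap ℝ ℂ)) =
      ⋃ p, spectrum ℂ ((M.toSquareBlock b p).map (algebraMap ℝ ℂ)) :=
    (hM.map (algebraMap ℝ ℂ)).spectrum_eq_iUnion_toSquareBlock
  simp only [IsHurwitz, hspec, Set.mem_iUnion, forall_exists_index]
  exact forall_comm

/-- A real square block matrix in the block incidence algebra of a finite poset is Hurwitz
if and only if all of its diagonal blocks are Hurwitz. -/
theorem blockIncidence_isHurwitz_iff {P : Type*} [PartialOrder P] [Fintype P] [DecidableEq P]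
    (n : P → ℕ)
    (M : Matrix (Σ i : P, Fin (n i)) (Σ j : P, Fin (n j)) ℝ)
    (hM : BlockIncidence M) :
    IsHurwitz M ↔ ∀ i : P, IsHurwitz (diagBlock M i) :=
  (blockIncidence_isHurwitz_iff_general fun x y => hM x.1 x.2 y.1 y.2).trans
    (forall_congr' (isHurwitz_toSquareBlock_fst_iff M))
end

section
/- Let P be a finite partially ordered set, F a field, and fix block sizes so that P21 is a square block matrix, P22 a block matrix, and K a block matrix over F of compatible sizes. Assume P21 and P22 lie in the block incidence algebra I(P), that P21 is invertible with P21⁻¹ ∈ I(P), and that the matrix 1 − P22*K is invertible. Define Q := K * (1 − P22*K)⁻¹ * P21. Then: (a) the matrix 1 + P22*Q*P21⁻¹ is invertible and K = Q * P21⁻¹ * (1 + P22*Q*P21⁻¹)⁻¹; and (b) K lies in I(P) if and only if Q lies in I(P). -/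
/-!
The feedback transform `K ↦ K (1 - G K)⁻¹` satisfies `1 + G K (1 - G K)⁻¹ = (1 - G K)⁻¹`, so it is
undone by the feedback transform with `-G` in place of `G`. By Cayley–Hamilton the inverse of a
square matrix is a polynomial in it, so incidence algebras are closed under inversion. Hence both
transforms preserve incidence when `G` is an incidence matrix, and so does multiplication by an
invertible incidence matrix or by its inverse.
-/

theorem matrix_inv_mem_adjoin_singleton {ι R : Type*} [Fintype ι] [DecidableEq ι] [CommRing R]
    (A : Matrix ι ι R) : A⁻¹ ∈ Algebra.adjoin R {A} := by
  by_cases hA : IsUnit A.det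
  · set c := A.charpoly.coeff 0
    set B := Polynomial.aeval A A.charpoly.divX
    have hB : B ∈ Algebra.adjoin R {A} := Polynomial.aeval_mem_adjoin_singleton R A
    have hc : IsUnit c := by
      rw [A.det_eq_sign_charpoly_coeff] at hA
      exact isUnit_of_mul_isUnit_right hA
    have cayley_hamilton : B * A + c • 1 = 0 := by
      have h := A.aeval_self_charpoly
      rwa [← A.charpoly.divX_mul_X_add, map_add, map_mul, Polynomial.aeval_X, Polynomial.aeval_C,
        Algebra.algebraMap_eq_smul_one] at h
    have smul_inv : c • A⁻¹ = -B :=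
      calc c • A⁻¹ = (c • 1) * A⁻¹ := by rw [Matrix.smul_mul, Matrix.one_mul]
        _ = -(B * A) * A⁻¹ := by rw [eq_neg_of_add_eq_zero_right cayley_hamilton]
        _ = -B := by rw [Matrix.neg_mul, Matrix.mul_nonsing_inv_cancel_right _ _ hA]
    rw [← Subalgebra.mem_toSubmodule, ← Submodule.smul_mem_iff_of_isUnit _ hc, smul_inv]
    exact neg_mem hB
  · rw [Matrix.nonsing_inv_apply_not_isUnit A hA]
    exact zero_mem _

section Feedback

variable {ι κ R : Type*} [Fintype ι] [Fintype κ] [DecidableEq ι] [CommRing R]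

/-- The closed-loop transfer matrix `K (1 - G K)⁻¹` of a plant `G` in positive feedback with a
controller `K`. It is meaningful only when `1 - G K` is invertible; otherwise it is `0`. -/
noncomputable def feedback (G : Matrix ι κ R) (K : Matrix κ ι R) : Matrix κ ι R :=
  K * (1 - G * K)⁻¹

variable {G : Matrix ι κ R} {K : Matrix κ ι R}

theorem one_add_mul_feedback (h : IsUnit (1 - G * K)) :
    1 + G * feedback G K = (1 - G * K)⁻¹ := by
  have h_inv : (1 - G * K) * (1 - G * K)⁻¹ = 1 :=
    Matrix.mul_nonsing_inv _ ((Matrix.isUnit_iff_isUnit_det _).1 h)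
  rw [Matrix.sub_mul, Matrix.one_mul, Matrix.mul_assoc] at h_inv
  exact (sub_eq_iff_eq_add.1 h_inv).symm

theorem isUnit_one_add_mul_feedback (h : IsUnit (1 - G * K)) :
    IsUnit (1 + G * feedback G K) := by
  rw [one_add_mul_feedback h]
  exact Matrix.isUnit_nonsing_inv_iff.2 h

theorem feedback_mul_inv_one_add_mul_feedback (h : IsUnit (1 - G * K)) :
    feedback G K * (1 + G * feedback G K)⁻¹ = K := by
  have h_det : IsUnit (1 - G * K).det := (Matrix.isUnit_iff_isUnit_det _).1 h
  rw [one_add_mul_feedback h, Matrix.nonsing_inv_nonsing_inv _ h_det, feedback,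
    Matrix.nonsing_inv_mul_cancel_right _ _ h_det]

theorem feedback_neg_feedback (h : IsUnit (1 - G * K)) : feedback (-G) (feedback G K) = K := by
  rw [feedback, Matrix.neg_mul, sub_neg_eq_add, feedback_mul_inv_one_add_mul_feedback h]

end Feedback

/-- A matrix whose rows and columns are labelled by elements of a preorder through `r` and `c` is an
incidence matrix if its entries vanish unless the column label is at most the row label. The
labellings play the role of the block structure, as in `Matrix.BlockTriangular`. -/
def IsIncidence {ι κ P R : Type*} [LE P] [Zero R] (r : ι → P) (c : κ → P) (M : Matrix ι κ R) :
    Prop :=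
  ∀ i j, ¬ c j ≤ r i → M i j = 0

theorem blockIncidence_iff_isIncidence {P R : Type*} [PartialOrder P] [Zero R] {n m : P → ℕ}
    {M : Matrix (Σ i : P, Fin (n i)) (Σ j : P, Fin (m j)) R} :
    BlockIncidence M ↔ IsIncidence Sigma.fst Sigma.fst M :=
  ⟨fun h i j => h i.1 i.2 j.1 j.2, fun h i a j b => h ⟨i, a⟩ ⟨j, b⟩⟩

namespace IsIncidence

protected theorem neg {ι κ P R : Type*} [LE P] [NegZeroClass R] {r : ι → P} {c : κ → P}
    {M : Matrix ι κ R} (hM : IsIncidence r c M) : IsIncidence r c (-M) := fun i j hij => by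
  rw [Matrix.neg_apply, hM i j hij, neg_zero]

protected theorem mul {ι κ μ P R : Type*} [Fintype κ] [Preorder P] [NonUnitalNonAssocSemiring R]
    {r : ι → P} {s : κ → P} {c : μ → P} {A : Matrix ι κ R} {B : Matrix κ μ R}
    (hA : IsIncidence r s A) (hB : IsIncidence s c B) : IsIncidence r c (A * B) := by
  intro i j hij
  rw [Matrix.mul_apply]
  refine Finset.sum_eq_zero fun k _ => ?_
  by_cases hk : s k ≤ r i
  · rw [hB k j fun h => hij (h.trans hk), mul_zero]
  · rw [hA i k hk, zero_mul]

end IsIncidence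

/-- The block incidence algebra `I(P)`, with blocks given by the fibres of `b`. -/
def incidenceSubalgebra {ι P : Type*} (R : Type*) [Fintype ι] [DecidableEq ι] [Preorder P]
    [CommSemiring R] (b : ι → P) : Subalgebra R (Matrix ι ι R) where
  carrier := {M | IsIncidence b b M}
  mul_mem' := IsIncidence.mul
  add_mem' hA hB i j hij := by rw [Matrix.add_apply, hA i j hij, hB i j hij, add_zero]
  algebraMap_mem' a i j hij := by
    rw [Matrix.algebraMap_matrix_apply, if_neg]
    rintro rfl
    exact hij le_rfl

namespace IsIncidence

variable {ι κ P R : Type*} [Fintype ι] [DecidableEq ι] [Preorder P] [CommRing R]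
  {b : ι → P} {c : κ → P}

protected theorem inv {A : Matrix ι ι R} (hA : IsIncidence b b A) : IsIncidence b b A⁻¹ :=
  have adjoin_le : Algebra.adjoin R {A} ≤ incidenceSubalgebra R b :=
    Algebra.adjoin_le (Set.singleton_subset_iff.2 hA)
  adjoin_le (matrix_inv_mem_adjoin_singleton A)

theorem mul_right_iff {A : Matrix ι ι R} (hA : IsIncidence b b A) (h : IsUnit A)
    {M : Matrix κ ι R} : IsIncidence c b (M * A) ↔ IsIncidence c b M := by
  refine ⟨fun hMA => ?_, fun hM => hM.mul hA⟩
  rw [← Matrix.mul_nonsing_inv_cancel_right A M ((Matrix.isUnit_iff_isUnit_det A).1 h)]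
  exact hMA.mul hA.inv

variable [Fintype κ] {G : Matrix ι κ R} {K : Matrix κ ι R}

protected theorem feedback (hG : IsIncidence b c G) (hK : IsIncidence c b K) :
    IsIncidence c b (feedback G K) :=
  have one_sub_mem : 1 - G * K ∈ incidenceSubalgebra R b := sub_mem (one_mem _) (hG.mul hK)
  hK.mul (IsIncidence.inv one_sub_mem)

theorem feedback_iff (hG : IsIncidence b c G) (h : IsUnit (1 - G * K)) :
    IsIncidence c b (feedback G K) ↔ IsIncidence c b K :=
  ⟨fun hF => feedback_neg_feedback h ▸ hG.neg.feedback hF, hG.feedback⟩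

end IsIncidence

theorem reparametrization_incidence_general {ι κ P R : Type*} [Fintype ι] [Fintype κ]
    [DecidableEq ι] [Preorder P] [CommRing R] {b : ι → P} {c : κ → P}
    {P21 : Matrix ι ι R} {P22 : Matrix ι κ R} {K : Matrix κ ι R}
    (h21 : IsIncidence b b P21) (h22 : IsIncidence b c P22)
    (h21unit : IsUnit P21) (hIK : IsUnit (1 - P22 * K)) :
    (IsUnit (1 + P22 * (K * (1 - P22 * K)⁻¹ * P21) * P21⁻¹) ∧
      K = (K * (1 - P22 * K)⁻¹ * P21) * P21⁻¹ *
        (1 + P22 * (K * (1 - P22 * K)⁻¹ * P21) * P21⁻¹)⁻¹) ∧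
    (IsIncidence c b K ↔ IsIncidence c b (K * (1 - P22 * K)⁻¹ * P21)) := by
  rw [h21.mul_right_iff h21unit, Matrix.mul_assoc P22,
    Matrix.mul_nonsing_inv_cancel_right _ _ ((Matrix.isUnit_iff_isUnit_det _).1 h21unit)]
  exact ⟨⟨isUnit_one_add_mul_feedback hIK, (feedback_mul_inv_one_add_mul_feedback hIK).symm⟩,
    (h22.feedback_iff hIK).symm⟩

/-- The reparametrization `Q = K (1 − P22 K)⁻¹ P21` is a bijective change of variables:
`K` can be recovered from `Q` via `K = Q P21⁻¹ (1 + P22 Q P21⁻¹)⁻¹`, and `K` lies in the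
block incidence algebra of the poset iff `Q` does. -/
theorem reparametrization_incidence {P : Type*} [PartialOrder P] [Fintype P] [DecidableEq P]
    {F : Type*} [Field F] (n m : P → ℕ)
    (P21 : Matrix (Σ i : P, Fin (n i)) (Σ j : P, Fin (n j)) F)
    (P22 : Matrix (Σ i : P, Fin (n i)) (Σ j : P, Fin (m j)) F)
    (K : Matrix (Σ i : P, Fin (m i)) (Σ j : P, Fin (n j)) F)
    (h21 : BlockIncidence P21) (h22 : BlockIncidence P22)
    (h21unit : IsUnit P21) (h21inv : BlockIncidence P21⁻¹)
    (hIK : IsUnit (1 - P22 * K)) :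
    (IsUnit (1 + P22 * (K * (1 - P22 * K)⁻¹ * P21) * P21⁻¹) ∧
      K = (K * (1 - P22 * K)⁻¹ * P21) * P21⁻¹ *
        (1 + P22 * (K * (1 - P22 * K)⁻¹ * P21) * P21⁻¹)⁻¹) ∧
    (BlockIncidence K ↔ BlockIncidence (K * (1 - P22 * K)⁻¹ * P21)) := by
  rw [blockIncidence_iff_isIncidence] at h21 h22
  simpa only [blockIncidence_iff_isIncidence] using
    reparametrization_incidence_general h21 h22 h21unit hIK
end

section
/- Let P be a finite partially ordered set, m, w : P → ℕ, L : ℕ, and let P11 : Matrix (Fin L) (Σ j : P, Fin (w j)) ℝ and P12 : Matrix (Fin L) (Σ i : P, Fin (m i)) ℝ be real matrices. Then the infimum, over all block matrices Q : Matrix (Σ i, Fin (m i)) (Σ j, Fin (w j)) ℝ lying in the block incidence algebra I(P), of the squared Frobenius norm ‖P11 + P12 * Q‖² (the sum of the squares of all entries), equals the sum over all column indices (j,b) of the infimum, over all vectors v : (Σ i : P, Fin (m i)) → ℝ satisfying v (i,a) = 0 whenever ¬ (j ≤ i), of the squared Euclidean norm ∑_{k : Fin L} (P11 k (j,b) + (P12.mulVec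 v) k)². -/
/-!
Column `j` of `P11 + P12 * Q` depends only on column `j` of `Q`, and membership in the incidence
algebra constrains each column of `Q` independently. The values of the matrix problem therefore form
the Minkowski sum of the value sets of the column problems, and the infimum of a Minkowski sum of
nonempty sets bounded below is the sum of the infima.
-/

section FinsetSum

open scoped Pointwise

variable {ι α : Type*} {s : Finset ι} {S : ι → Set α}

theorem nonempty_finsetSum [AddCommMonoid α] (hS : ∀ i ∈ s, (S i).Nonempty) :
    (∑ i ∈ s, S i).Nonempty :=
  Finset.sum_induction S Set.Nonempty (fun _ _ ↦ Set.Nonempty.add) Set.zero_nonempty hS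

theorem bddBelow_finsetSum [AddCommMonoid α] [Preorder α] [AddLeftMono α]
    (hS : ∀ i ∈ s, BddBelow (S i)) : BddBelow (∑ i ∈ s, S i) :=
  Finset.sum_induction S BddBelow (fun _ _ ↦ BddBelow.add) (bddBelow_singleton (a := 0)) hS

theorem csInf_finsetSum [ConditionallyCompleteLattice α] [AddCommGroup α] [AddLeftMono α]
    (hne : ∀ i ∈ s, (S i).Nonempty) (hbdd : ∀ i ∈ s, BddBelow (S i)) :
    sInf (∑ i ∈ s, S i) = ∑ i ∈ s, sInf (S i) := by
  induction s using Finset.cons_induction with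
  | empty => simp [← Set.singleton_zero]
  | cons i s hi ih =>
    rw [Finset.forall_mem_cons] at hne hbdd
    rw [Finset.sum_cons, Finset.sum_cons, ← ih hne.2 hbdd.2]
    exact csInf_add hne.1 hbdd.1 (nonempty_finsetSum hne.2) (bddBelow_finsetSum hbdd.2)

end FinsetSum

section Columns

variable {κ ι o R : Type*} [Fintype κ] [Fintype ι] [Fintype o] [NonUnitalSeminormedRing R]

/-- The values attained by the problem of minimizing the squared Frobenius norm of `A + B * Q` over
the matrices `Q` whose `j`-th column lies in the admissible set `C j` for every `j`. -/
def matrixValues (C : o → Set (ι → R)) (A : Matrix κ o R) (B : Matrix κ ι R) : Set ℝ :=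
  {c | ∃ Q : Matrix ι o R, (∀ j, Q.col j ∈ C j) ∧ c = ∑ k, ∑ j, ‖(A + B * Q) k j‖ ^ 2}

/-- The values attained by the problem of minimizing the squared Euclidean norm of `a + B v` over
the vectors `v` in the admissible set `C`. -/
def columnValues (C : Set (ι → R)) (a : κ → R) (B : Matrix κ ι R) : Set ℝ :=
  {c | ∃ v ∈ C, c = ∑ k, ‖a k + B.mulVec v k‖ ^ 2}

theorem columnValues_nonempty {C : Set (ι → R)} (hC : C.Nonempty) (a : κ → R)
    (B : Matrix κ ι R) : (columnValues C a B).Nonempty :=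
  let ⟨v, hv⟩ := hC
  ⟨_, v, hv, rfl⟩

theorem bddBelow_columnValues (C : Set (ι → R)) (a : κ → R) (B : Matrix κ ι R) :
    BddBelow (columnValues C a B) := by
  refine ⟨0, ?_⟩
  rintro _ ⟨v, -, rfl⟩
  positivity

theorem sum_norm_sq_add_mul (A : Matrix κ o R) (B : Matrix κ ι R) (Q : Matrix ι o R) :
    ∑ k, ∑ j, ‖(A + B * Q) k j‖ ^ 2 = ∑ j, ∑ k, ‖A.col j k + B.mulVec (Q.col j) k‖ ^ 2 :=
  Finset.sum_comm

open scoped Pointwise in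
theorem matrixValues_eq_sum_columnValues (C : o → Set (ι → R)) (A : Matrix κ o R)
    (B : Matrix κ ι R) : matrixValues C A B = ∑ j, columnValues (C j) (A.col j) B := by
  ext c
  simp only [matrixValues, Set.mem_ofPred_eq, Set.mem_fintype_sum, sum_norm_sq_add_mul]
  constructor
  · rintro ⟨Q, hQ, rfl⟩
    exact ⟨_, fun j ↦ ⟨Q.col j, hQ j, rfl⟩, rfl⟩
  · rintro ⟨g, hg, rfl⟩
    choose v hv hgv using hg
    exact ⟨Matrix.of fun i j ↦ v j i, hv, Fintype.sum_congr _ _ hgv⟩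

theorem frobenius_separability_general (C : o → Set (ι → R)) (hC : ∀ j, (C j).Nonempty)
    (A : Matrix κ o R) (B : Matrix κ ι R) :
    sInf (matrixValues C A B) = ∑ j, sInf (columnValues (C j) (A.col j) B) := by
  rw [matrixValues_eq_sum_columnValues]
  exact csInf_finsetSum (fun j _ ↦ columnValues_nonempty (hC j) (A.col j) B)
    fun j _ ↦ bddBelow_columnValues (C j) (A.col j) B

end Columns

section Incidence

variable {P R : Type*} [Zero R]

/-- The block vectors supported on the up-set of `p`: the columns allowed in block column `p` of a
matrix in the block incidence algebra. -/
def incidenceColumns [LE P] (n : P → ℕ) (p : P) : Set ((Σ i : P, Fin (n i)) → R) :=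
  {v | ∀ (i : P) (a : Fin (n i)), ¬ (p ≤ i) → v ⟨i, a⟩ = 0}

theorem mem_incidenceColumns [LE P] {n : P → ℕ} {p : P} {v : (Σ i : P, Fin (n i)) → R} :
    v ∈ incidenceColumns n p ↔ ∀ (i : P) (a : Fin (n i)), ¬ (p ≤ i) → v ⟨i, a⟩ = 0 :=
  Iff.rfl

theorem zero_mem_incidenceColumns [LE P] (n : P → ℕ) (p : P) :
    (0 : (Σ i : P, Fin (n i)) → R) ∈ incidenceColumns n p :=
  fun _ _ _ ↦ rfl

theorem blockIncidence_iff_forall_col_mem [PartialOrder P] {n m : P → ℕ}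
    {M : Matrix (Σ i : P, Fin (n i)) (Σ j : P, Fin (m j)) R} :
    BlockIncidence M ↔ ∀ jb, M.col jb ∈ incidenceColumns n jb.1 :=
  ⟨fun h jb i a hij ↦ h i a jb.1 jb.2 hij, fun h i a j b hij ↦ h ⟨j, b⟩ i a hij⟩

end Incidence

/-- Column-wise separability of the Frobenius-norm optimal control problem over the block
incidence algebra: the infimum of `‖P11 + P12 Q‖²` over all `Q` in the incidence algebra
equals the sum over columns of the infima of the corresponding column problems, in which
only the sparsity pattern of the single column is enforced. -/
theorem frobenius_separability {P : Type*} [PartialOrder P] [Fintype P] [DecidableEq P]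
    (m w : P → ℕ) (L : ℕ)
    (P11 : Matrix (Fin L) (Σ j : P, Fin (w j)) ℝ)
    (P12 : Matrix (Fin L) (Σ i : P, Fin (m i)) ℝ) :
    sInf {c : ℝ | ∃ Q : Matrix (Σ i : P, Fin (m i)) (Σ j : P, Fin (w j)) ℝ,
        BlockIncidence Q ∧
        c = ∑ k : Fin L, ∑ jb : Σ j : P, Fin (w j), ((P11 + P12 * Q) k jb) ^ 2} =
    ∑ jb : Σ j : P, Fin (w j),
      sInf {c : ℝ | ∃ v : (Σ i : P, Fin (m i)) → ℝ,
        (∀ (i : P) (a : Fin (m i)), ¬ (jb.1 ≤ i) → v ⟨i, a⟩ = 0) ∧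
        c = ∑ k : Fin L, (P11 k jb + P12.mulVec v k) ^ 2} := by
  simpa only [matrixValues, columnValues, blockIncidence_iff_forall_col_mem, mem_incidenceColumns,
    Matrix.col_apply, Real.norm_eq_abs, sq_abs] using
    frobenius_separability_general _ (fun jb ↦ ⟨0, zero_mem_incidenceColumns m jb.1⟩) P11 P12
end

section
/- Let F be a field and let A, B, C be matrices over F of sizes N×N, N×p, and p×N respectively. Over RatFunc F, define Φ := 1 + C' * (X • 1 − A')⁻¹ * B' and Γ := 1 − C' * (X • 1 − (A' − B'*C'))⁻¹ * B', where primes denote entrywise application of the canonical ring map F → RatFunc F and X is the rational-function indeterminate (both X • 1 − A' and X • 1 − (A' − B'*C') are invertible because their determinants are images of characteristic polynomials). Then Φ * Γ = 1 and Γ * Φ = 1; that is, Φ and Γ are two-sided inverses of each other in the ring of p×p matrices over RatFunc F. -/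
set_option synthInstance.maxHeartbeats 1000000

/-!
The resolvent identity `P⁻¹ - Q⁻¹ = P⁻¹ (Q - P) Q⁻¹` with `Q - P = B C`, multiplied by `C` on the
left and `B` on the right, makes the cross terms of `(1 + C P⁻¹ B) (1 - C Q⁻¹ B)` cancel. For
`P = X - A` and `Q = X - (A - B C)` both inverses exist, because characteristic polynomials are
monic and hence become invertible once fractions of polynomials are allowed.
-/

section Resolvent

variable {m n S : Type*} [Fintype m] [Fintype n] [DecidableEq n] [CommRing S]

theorem mul_inv_mul_mul_mul_inv_mul_eq_sub {P Q : Matrix n n S} {B : Matrix n m S}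
    {C : Matrix m n S} (hPQ : IsUnit P ↔ IsUnit Q) (hBC : B * C = Q - P) :
    C * P⁻¹ * B * (C * Q⁻¹ * B) = C * P⁻¹ * B - C * Q⁻¹ * B := by
  calc C * P⁻¹ * B * (C * Q⁻¹ * B)
      = C * (P⁻¹ * (B * C) * Q⁻¹) * B := by simp only [Matrix.mul_assoc]
    _ = C * (P⁻¹ - Q⁻¹) * B := by rw [hBC, Matrix.inv_sub_inv hPQ]
    _ = C * P⁻¹ * B - C * Q⁻¹ * B := by rw [Matrix.mul_sub, Matrix.sub_mul]

theorem one_add_mul_inv_mul_mul_one_sub_mul_inv_mul [DecidableEq m] {P Q : Matrix n n S}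
    {B : Matrix n m S} {C : Matrix m n S} (hPQ : IsUnit P ↔ IsUnit Q) (hBC : B * C = Q - P) :
    (1 + C * P⁻¹ * B) * (1 - C * Q⁻¹ * B) = 1 := by
  rw [add_mul, one_mul, mul_sub, mul_one, mul_inv_mul_mul_mul_inv_mul_eq_sub hPQ hBC]
  abel

end Resolvent

section FractionRing

open Polynomial

variable {R K n : Type*} [CommRing R] [CommRing K] [Algebra R K] [Algebra R[X] K]
  [IsScalarTower R R[X] K] [Fintype n] [DecidableEq n]

theorem map_algebraMap_charmatrix (A : Matrix n n R) :
    A.charmatrix.map (algebraMap R[X] K) =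
      algebraMap R[X] K X • (1 : Matrix n n K) - A.map (algebraMap R K) := by
  ext i j
  rcases eq_or_ne i j with rfl | hij
  · simp [-algebraMap_smul, IsScalarTower.algebraMap_apply R R[X] K]
  · simp [hij, IsScalarTower.algebraMap_apply R R[X] K]

theorem isUnit_algebraMap_X_smul_one_sub_map [IsFractionRing R[X] K] (A : Matrix n n R) :
    IsUnit (algebraMap R[X] K X • (1 : Matrix n n K) - A.map (algebraMap R K)) := by
  have det_eq : (A.charmatrix.map (algebraMap R[X] K)).det = algebraMap R[X] K A.charpoly :=
    ((algebraMap R[X] K).map_det A.charmatrix).symm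
  rw [← map_algebraMap_charmatrix, Matrix.isUnit_iff_isUnit_det, det_eq]
  exact IsLocalization.map_units K ⟨A.charpoly, A.charpoly_monic.mem_nonZeroDivisors⟩

theorem propagation_differential_inverse_general {m : Type*} [Fintype m] [DecidableEq m]
    [IsFractionRing R[X] K] (A : Matrix n n R) (B : Matrix n m R) (C : Matrix m n R) :
    ((1 : Matrix m m K) + C.map (algebraMap R K) *
          (algebraMap R[X] K X • (1 : Matrix n n K) - A.map (algebraMap R K))⁻¹ *
          B.map (algebraMap R K)) *
      ((1 : Matrix m m K) - C.map (algebraMap R K) *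
          (algebraMap R[X] K X • (1 : Matrix n n K) -
            (A.map (algebraMap R K) - B.map (algebraMap R K) * C.map (algebraMap R K)))⁻¹ *
          B.map (algebraMap R K)) = 1 ∧
    ((1 : Matrix m m K) - C.map (algebraMap R K) *
          (algebraMap R[X] K X • (1 : Matrix n n K) -
            (A.map (algebraMap R K) - B.map (algebraMap R K) * C.map (algebraMap R K)))⁻¹ *
          B.map (algebraMap R K)) *
      ((1 : Matrix m m K) + C.map (algebraMap R K) *
          (algebraMap R[X] K X • (1 : Matrix n n K) - A.map (algebraMap R K))⁻¹ *
          B.map (algebraMap R K)) = 1 := by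
  have map_feedback : (A - B * C).map (algebraMap R K) =
      A.map (algebraMap R K) - B.map (algebraMap R K) * C.map (algebraMap R K) := by
    rw [Matrix.map_sub _ (map_sub _), Matrix.map_mul]
  have isUnit_openLoop := isUnit_algebraMap_X_smul_one_sub_map (K := K) A
  have isUnit_closedLoop := isUnit_algebraMap_X_smul_one_sub_map (K := K) (A - B * C)
  rw [map_feedback] at isUnit_closedLoop
  have right_inverse := one_add_mul_inv_mul_mul_one_sub_mul_inv_mul
    (B := B.map (algebraMap R K)) (C := C.map (algebraMap R K))
    (iff_of_true isUnit_openLoop isUnit_closedLoop) (by abel)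
  exact ⟨right_inverse, mul_eq_one_comm.mp right_inverse⟩

end FractionRing

/-- The propagation filter `Φ = 1 + C (X·1 − A)⁻¹ B` and the differential filter
`Γ = 1 − C (X·1 − (A − B C))⁻¹ B` are two-sided inverses of each other in the ring of
`p × p` matrices over the field of rational functions. -/
theorem propagation_differential_inverse {F : Type*} [Field F] {N p : ℕ}
    (A : Matrix (Fin N) (Fin N) F) (B : Matrix (Fin N) (Fin p) F)
    (C : Matrix (Fin p) (Fin N) F) :
    ((1 : Matrix (Fin p) (Fin p) (RatFunc F)) +
        C.map RatFunc.C *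
          ((RatFunc.X : RatFunc F) • (1 : Matrix (Fin N) (Fin N) (RatFunc F)) -
            A.map RatFunc.C)⁻¹ * B.map RatFunc.C) *
      ((1 : Matrix (Fin p) (Fin p) (RatFunc F)) -
        C.map RatFunc.C *
          ((RatFunc.X : RatFunc F) • (1 : Matrix (Fin N) (Fin N) (RatFunc F)) -
            (A.map RatFunc.C - B.map RatFunc.C * C.map RatFunc.C))⁻¹ * B.map RatFunc.C) = 1 ∧
    ((1 : Matrix (Fin p) (Fin p) (RatFunc F)) -
        C.map RatFunc.C *
          ((RatFunc.X : RatFunc F) • (1 : Matrix (Fin N) (Fin N) (RatFunc F)) -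
            (A.map RatFunc.C - B.map RatFunc.C * C.map RatFunc.C))⁻¹ * B.map RatFunc.C) *
      ((1 : Matrix (Fin p) (Fin p) (RatFunc F)) +
        C.map RatFunc.C *
          ((RatFunc.X : RatFunc F) • (1 : Matrix (Fin N) (Fin N) (RatFunc F)) -
            A.map RatFunc.C)⁻¹ * B.map RatFunc.C) = 1 := by
  simpa only [RatFunc.algebraMap_X, RatFunc.algebraMap_eq_C] using
    propagation_differential_inverse_general (K := RatFunc F) A B C
end

section
/- Let F be a field and let A, B, C, C₂, D be matrices over F of sizes N×N, N×p, p×N, q×N, and q×p respectively. Over RatFunc F (with primes denoting entrywise application of the canonical map F → RatFunc F and X the indeterminate), the following identity of q×p matrices holds: ((C₂' − D'*C') * (X • 1 − (A' − B'*C'))⁻¹ * B' + D') * (1 + C' * (X • 1 − A')⁻¹ * B') = C₂' * (X • 1 − A')⁻¹ * B' + D'. -/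
set_option synthInstance.maxHeartbeats 1000000

/-!
With `S = X • 1 - A` and `T = X • 1 - (A - B * C) = S + B * C`, one has
`B * (1 + C * S⁻¹ * B) = (S + B * C) * S⁻¹ * B = T * (S⁻¹ * B)`, so multiplying `T⁻¹ * B` on the
right by `1 + C * S⁻¹ * B` gives `S⁻¹ * B`. After this substitution the terms in `D * C` cancel.
Both inverses are genuine because the two determinants are characteristic polynomials, which are
monic and hence become units in the fraction ring.
-/

section

open Polynomial

variable {R L l m n : Type*} [CommRing R] [CommRing L]
  [Fintype m] [DecidableEq m] [Fintype n] [DecidableEq n]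

theorem det_smul_one_sub_map_algebraMap [Algebra R L] (x : L) (M : Matrix n n R) :
    (x • (1 : Matrix n n L) - M.map (algebraMap R L)).det = aeval x M.charpoly := by
  rw [aeval_def, ← eval_map, ← Matrix.charpoly_map, Matrix.eval_charpoly,
    Matrix.scalar_apply, Matrix.smul_one_eq_diagonal]

theorem isUnit_det_algebraMap_X_smul_one_sub_map [Algebra R L] [Algebra R[X] L]
    [IsScalarTower R R[X] L] [IsFractionRing R[X] L] (M : Matrix n n R) :
    IsUnit (algebraMap R[X] L X • (1 : Matrix n n L) - M.map (algebraMap R L)).det := by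
  rw [det_smul_one_sub_map_algebraMap, aeval_algebraMap_apply, aeval_X_left_apply]
  exact IsLocalization.map_units L ⟨M.charpoly, M.charpoly_monic.mem_nonZeroDivisors⟩

theorem inv_add_mul_mul_mul_one_add (S : Matrix n n R) (B : Matrix n m R) (C : Matrix m n R)
    (hS : IsUnit S.det) (hT : IsUnit (S + B * C).det) :
    (S + B * C)⁻¹ * B * (1 + C * S⁻¹ * B) = S⁻¹ * B := by
  have push_through : B * (1 + C * S⁻¹ * B) = (S + B * C) * (S⁻¹ * B) := by
    rw [Matrix.mul_add, Matrix.mul_one, Matrix.add_mul,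
      Matrix.mul_nonsing_inv_cancel_left _ _ hS]
    simp only [Matrix.mul_assoc]
  rw [Matrix.mul_assoc, push_through, Matrix.nonsing_inv_mul_cancel_left _ _ hT]

theorem sub_mul_inv_add_mul_mul_one_add (S : Matrix n n R) (B : Matrix n m R)
    (C : Matrix m n R) (C₂ : Matrix l n R) (D : Matrix l m R)
    (hS : IsUnit S.det) (hT : IsUnit (S + B * C).det) :
    ((C₂ - D * C) * (S + B * C)⁻¹ * B + D) * (1 + C * S⁻¹ * B) = C₂ * S⁻¹ * B + D :=
  calc
    _ = (C₂ - D * C) * ((S + B * C)⁻¹ * B * (1 + C * S⁻¹ * B)) + D * (1 + C * S⁻¹ * B) := by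
      simp only [Matrix.add_mul, Matrix.mul_assoc]
    _ = (C₂ - D * C) * (S⁻¹ * B) + D * (1 + C * S⁻¹ * B) := by
      rw [inv_add_mul_mul_mul_one_add S B C hS hT]
    _ = C₂ * S⁻¹ * B + D := by
      simp only [Matrix.sub_mul, Matrix.mul_add, Matrix.mul_one, Matrix.mul_assoc]
      abel

theorem coprime_factorization_identity_general [Algebra R L] [Algebra R[X] L]
    [IsScalarTower R R[X] L] [IsFractionRing R[X] L]
    (A : Matrix n n R) (B : Matrix n m R) (C : Matrix m n R) (C₂ : Matrix l n R)
    (D : Matrix l m R) :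
    ((C₂.map (algebraMap R L) - D.map (algebraMap R L) * C.map (algebraMap R L)) *
        (algebraMap R[X] L X • (1 : Matrix n n L) -
          (A.map (algebraMap R L) - B.map (algebraMap R L) * C.map (algebraMap R L)))⁻¹ *
        B.map (algebraMap R L) + D.map (algebraMap R L)) *
      (1 + C.map (algebraMap R L) *
        (algebraMap R[X] L X • (1 : Matrix n n L) - A.map (algebraMap R L))⁻¹ *
        B.map (algebraMap R L)) =
    C₂.map (algebraMap R L) *
      (algebraMap R[X] L X • (1 : Matrix n n L) - A.map (algebraMap R L))⁻¹ *
      B.map (algebraMap R L) + D.map (algebraMap R L) := by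
  have hS := isUnit_det_algebraMap_X_smul_one_sub_map (L := L) A
  have hT := isUnit_det_algebraMap_X_smul_one_sub_map (L := L) (A - B * C)
  rw [Matrix.map_sub _ (map_sub _), Matrix.map_mul, sub_sub_eq_add_sub, add_sub_right_comm] at hT
  rw [sub_sub_eq_add_sub, add_sub_right_comm]
  exact sub_mul_inv_add_mul_mul_one_add _ _ _ _ _ hS hT

end

/-- The coprime-factorization identity: for matrices `A, B, C, C₂, D` over a field `F`,
over the field of rational functions one has
`((C₂ − D C)(X·1 − (A − B C))⁻¹ B + D)(1 + C (X·1 − A)⁻¹ B) = C₂ (X·1 − A)⁻¹ B + D`. -/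
theorem coprime_factorization_identity {F : Type*} [Field F] {N p q : ℕ}
    (A : Matrix (Fin N) (Fin N) F) (B : Matrix (Fin N) (Fin p) F)
    (C : Matrix (Fin p) (Fin N) F) (C₂ : Matrix (Fin q) (Fin N) F)
    (D : Matrix (Fin q) (Fin p) F) :
    ((C₂.map RatFunc.C - D.map RatFunc.C * C.map RatFunc.C) *
        ((RatFunc.X : RatFunc F) • (1 : Matrix (Fin N) (Fin N) (RatFunc F)) -
          (A.map RatFunc.C - B.map RatFunc.C * C.map RatFunc.C))⁻¹ * B.map RatFunc.C +
      D.map RatFunc.C) *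
    ((1 : Matrix (Fin p) (Fin p) (RatFunc F)) +
      C.map RatFunc.C *
        ((RatFunc.X : RatFunc F) • (1 : Matrix (Fin N) (Fin N) (RatFunc F)) -
          A.map RatFunc.C)⁻¹ * B.map RatFunc.C) =
    C₂.map RatFunc.C *
      ((RatFunc.X : RatFunc F) • (1 : Matrix (Fin N) (Fin N) (RatFunc F)) -
        A.map RatFunc.C)⁻¹ * B.map RatFunc.C + D.map RatFunc.C :=
  coprime_factorization_identity_general A B C C₂ D
end

section
/- Let P be a finite partially ordered set, m, w : P → ℕ, L : ℕ, and let P11 : Matrix (Fin L) (Σ j : P, Fin (w j)) (RatFunc ℝ) and P12 : Matrix (Fin L) (Σ i : P, Fin (m i)) (RatFunc ℝ) be matrices of real rational functions. For a matrix (or column vector) H with entries in RatFunc ℝ, define its H₂ cost J(H) := ∫⁻_{ω ∈ ℝ} ENNReal.ofReal( ∑_{entries h of H} Complex.normSq( h evaluated at the point I*ω via the ring map ℝ → ℂ, with evaluation defined to be 0 at poles) ) dω, a value in ℝ≥0∞. Then the infimum, over all block matrices Q : Matrix (Σ i, Fin (m i)) (Σ j, Fin (w j)) (RatFunc ℝ)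 lying in the block incidence algebra I(P), of J(P11 + P12 * Q), equals the sum over all column indices (j,b) of the infimum, over all vectors v : (Σ i : P, Fin (m i)) → RatFunc ℝ satisfying v (i,a) = 0 whenever ¬ (j ≤ i), of J of the column vector (fun k => P11 k (j,b) + (P12.mulVec v) k). -/
open scoped ENNReal

/-- The `H₂` cost of a matrix of real rational functions: the Lebesgue integral over the
imaginary axis of the squared Frobenius norm of the matrix evaluated at `I·ω` (evaluation
of a rational function at a pole is defined to be `0`). -/
noncomputable def H2cost {α β : Type*} [Fintype α] [Fintype β]
    (H : Matrix α β (RatFunc ℝ)) : ℝ≥0∞ :=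
  ∫⁻ ω : ℝ, ENNReal.ofReal (∑ a : α, ∑ b : β,
    Complex.normSq (RatFunc.eval (algebraMap ℝ ℂ) (Complex.I * (ω : ℂ)) (H a b)))

/-! The squared Frobenius norm is the sum of the squared norms of the columns, and integration is
additive, so the `H₂` cost is the sum of the costs of the columns. Both the incidence constraint and
the map `Q ↦ P11 + P12 * Q` act on each column separately. The attainable costs therefore form the
Minkowski sum of the sets of attainable column costs, and taking infima in `ℝ≥0∞` turns a
Minkowski sum of sets into the sum of their infima. -/

theorem measurable_ratFunc_eval.{u} {K L : Type u} [Field K] [Field L] [TopologicalSpace L]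
    [IsTopologicalSemiring L] [MeasurableSpace L] [BorelSpace L] [MeasurableDiv₂ L]
    (f : K →+* L) (q : RatFunc K) : Measurable fun z : L => RatFunc.eval f z q :=
  (q.num.continuous_eval₂ f).measurable.div (q.denom.continuous_eval₂ f).measurable

theorem H2cost_eq_sum_col {α β : Type*} [Fintype α] [Fintype β] (H : Matrix α β (RatFunc ℝ)) :
    H2cost H = ∑ j, H2cost (Matrix.replicateCol Unit (H.col j)) := by
  have measurable_entry (a : α) (b : β) : Measurable fun ω : ℝ => Complex.normSq
      (RatFunc.eval (algebraMap ℝ ℂ) (Complex.I * (ω : ℂ)) (H a b)) :=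
    Complex.continuous_normSq.measurable.comp
      ((measurable_ratFunc_eval (algebraMap ℝ ℂ) (H a b)).comp (by fun_prop))
  simp only [H2cost, Finset.univ_unique, Finset.sum_singleton, Matrix.replicateCol_apply,
    Matrix.col_apply]
  rw [← MeasureTheory.lintegral_finsetSum _ fun b _ =>
    (Finset.measurable_sum _ fun a _ => measurable_entry a b).ennreal_ofReal]
  congr with ω
  rw [Finset.sum_comm, ENNReal.ofReal_sum_of_nonneg fun b _ =>
    Finset.sum_nonneg fun a _ => Complex.normSq_nonneg _]

theorem H2cost_add_mul {α ι κ : Type*} [Fintype α] [Fintype ι] [Fintype κ]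
    (P11 : Matrix α κ (RatFunc ℝ)) (P12 : Matrix α ι (RatFunc ℝ)) (Q : Matrix ι κ (RatFunc ℝ)) :
    H2cost (P11 + P12 * Q) = ∑ j, H2cost
      (Matrix.of fun (k : α) (_ : Unit) => P11 k j + P12.mulVec (Q.col j) k) :=
  H2cost_eq_sum_col (P11 + P12 * Q)

section MinkowskiSum

open scoped Pointwise

theorem sInf_add_ennreal (s t : Set ℝ≥0∞) : sInf (s + t) = sInf s + sInf t := by
  rw [ENNReal.sInf_add]
  simp only [ENNReal.add_sInf, ← Set.image2_add, sInf_image2]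

theorem sInf_finsetSum_ennreal {ι : Type*} (s : Finset ι) (S : ι → Set ℝ≥0∞) :
    sInf (∑ i ∈ s, S i) = ∑ i ∈ s, sInf (S i) :=
  let sInfHom : Set ℝ≥0∞ →+ ℝ≥0∞ :=
    { toFun := sInf
      map_zero' := sInf_singleton
      map_add' := sInf_add_ennreal }
  map_sum sInfHom S s

end MinkowskiSum

/-- The vectors that the block incidence algebra admits as columns of block column `j`: those
supported on the row blocks `i` with `j ≤ i`. -/
def admissibleColumns {P R : Type*} [LE P] [Zero R] (n : P → ℕ) (j : P) :
    Set ((Σ i : P, Fin (n i)) → R) :=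
  {v | ∀ (i : P) (a : Fin (n i)), ¬ (j ≤ i) → v ⟨i, a⟩ = 0}

theorem blockIncidence_iff_col_mem {P : Type*} [PartialOrder P] {R : Type*} [Zero R] {n m : P → ℕ}
    {M : Matrix (Σ i : P, Fin (n i)) (Σ j : P, Fin (m j)) R} :
    BlockIncidence M ↔ ∀ jb, M.col jb ∈ admissibleColumns n jb.1 :=
  ⟨fun hM jb i a => hM i a jb.1 jb.2, fun hM i a j b => hM ⟨j, b⟩ i a⟩

theorem H2_separability_general {α ι κ : Type*} [Fintype α] [Fintype ι] [Fintype κ]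
    (P11 : Matrix α κ (RatFunc ℝ)) (P12 : Matrix α ι (RatFunc ℝ))
    (V : κ → Set (ι → RatFunc ℝ)) :
    sInf {c : ℝ≥0∞ | ∃ Q : Matrix ι κ (RatFunc ℝ),
        (∀ j, Q.col j ∈ V j) ∧ c = H2cost (P11 + P12 * Q)} =
    ∑ j, sInf {c : ℝ≥0∞ | ∃ v ∈ V j,
        c = H2cost (Matrix.of fun (k : α) (_ : Unit) => P11 k j + P12.mulVec v k)} := by
  rw [← sInf_finsetSum_ennreal]
  congr 1 with c
  rw [Set.mem_fintype_sum]
  constructor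
  · rintro ⟨Q, hQ, rfl⟩
    exact ⟨_, fun j => ⟨Q.col j, hQ j, rfl⟩, (H2cost_add_mul P11 P12 Q).symm⟩
  · rintro ⟨cost, hcost, rfl⟩
    choose v hv hcost_eq using hcost
    refine ⟨Matrix.of fun i j => v j i, hv, ?_⟩
    rw [H2cost_add_mul]
    exact Finset.sum_congr rfl fun j _ => hcost_eq j

/-- Column-wise separability of the `H₂`-optimal control problem over the block incidence
algebra: the infimum of the `H₂` cost of `P11 + P12 Q` over all `Q` in the incidence
algebra equals the sum over columns of the infima of the corresponding column problems,
in which only the sparsity pattern of the single column is enforced. -/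
theorem H2_separability {P : Type*} [PartialOrder P] [Fintype P] [DecidableEq P]
    (m w : P → ℕ) (L : ℕ)
    (P11 : Matrix (Fin L) (Σ j : P, Fin (w j)) (RatFunc ℝ))
    (P12 : Matrix (Fin L) (Σ i : P, Fin (m i)) (RatFunc ℝ)) :
    sInf {c : ℝ≥0∞ | ∃ Q : Matrix (Σ i : P, Fin (m i)) (Σ j : P, Fin (w j)) (RatFunc ℝ),
        BlockIncidence Q ∧ c = H2cost (P11 + P12 * Q)} =
    ∑ jb : Σ j : P, Fin (w j),
      sInf {c : ℝ≥0∞ | ∃ v : (Σ i : P, Fin (m i)) → RatFunc ℝ,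
        (∀ (i : P) (a : Fin (m i)), ¬ (jb.1 ≤ i) → v ⟨i, a⟩ = 0) ∧
        c = H2cost (Matrix.of fun (k : Fin L) (_ : Unit) => P11 k jb + P12.mulVec v k)} := by
  simp only [blockIncidence_iff_col_mem]
  exact H2_separability_general P11 P12 fun jb => admissibleColumns m jb.1
end

section
/- Let F be a field and let A_Φ, B_Φ, C_Φ, C₂, D be matrices over F of sizes N×N, N×p, p×N, q×N, and q×p respectively. Over RatFunc F (with primes denoting entrywise application of the canonical map F → RatFunc F and X the indeterminate), define the controller transfer matrix K* := (C₂' − D'*C_Φ') * (X • 1 − (A_Φ' − B_Φ'*C_Φ'))⁻¹ * B_Φ' + D', the matrix K_Φ := C₂' * (X • 1 − A_Φ')⁻¹ * B_Φ' + D', and the differential filter Γ := 1 − C_Φ' * (X • 1 − (A_Φ' − B_Φ'*C_Φ'))⁻¹ * B_Φ'. Then K* = K_Φ * Γ. -/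
set_option synthInstance.maxHeartbeats 1000000

/-!
Let `P = X·1 − A_Φ` and `Q = X·1 − (A_Φ − B_Φ C_Φ) = P + B_Φ C_Φ`. Since `Q − B_Φ C_Φ = P`,
`B_Φ Γ = B_Φ (1 − C_Φ Q⁻¹ B_Φ) = P Q⁻¹ B_Φ`: the filter `Γ` turns the open-loop response `P⁻¹ B_Φ`
into the closed-loop response `Q⁻¹ B_Φ`. Multiplying by `C₂` on the left and adding `D Γ` gives the
factorization. Both `P` and `Q` are invertible because a transcendental element is not a root of a
characteristic polynomial.
-/

section FeedbackFactorization

variable {K l m n : Type*} [CommRing K] [Fintype m] [DecidableEq m] [Fintype n] [DecidableEq n]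
  {P : Matrix n n K} {B : Matrix n m K} {C : Matrix m n K}

theorem mul_one_sub_mul_inv_add_mul_mul (hQ : IsUnit (P + B * C).det) :
    B * (1 - C * (P + B * C)⁻¹ * B) = P * ((P + B * C)⁻¹ * B) := by
  calc B * (1 - C * (P + B * C)⁻¹ * B)
      = B - B * C * ((P + B * C)⁻¹ * B) := by
        simp only [Matrix.mul_sub, Matrix.mul_one, Matrix.mul_assoc]
    _ = (P + B * C) * ((P + B * C)⁻¹ * B) - B * C * ((P + B * C)⁻¹ * B) := by
        rw [Matrix.mul_nonsing_inv_cancel_left _ _ hQ]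
    _ = P * ((P + B * C)⁻¹ * B) := by
        rw [← Matrix.sub_mul, add_sub_cancel_right]

theorem inv_mul_mul_one_sub_mul_inv_add_mul_mul (hP : IsUnit P.det)
    (hQ : IsUnit (P + B * C).det) :
    P⁻¹ * B * (1 - C * (P + B * C)⁻¹ * B) = (P + B * C)⁻¹ * B := by
  rw [Matrix.mul_assoc, mul_one_sub_mul_inv_add_mul_mul hQ,
    Matrix.nonsing_inv_mul_cancel_left _ _ hP]

theorem sub_mul_inv_add_mul_mul_add_eq_mul (C₂ : Matrix l n K) (D : Matrix l m K)
    (hP : IsUnit P.det) (hQ : IsUnit (P + B * C).det) :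
    (C₂ - D * C) * (P + B * C)⁻¹ * B + D =
      (C₂ * P⁻¹ * B + D) * (1 - C * (P + B * C)⁻¹ * B) := by
  symm
  calc (C₂ * P⁻¹ * B + D) * (1 - C * (P + B * C)⁻¹ * B)
      = C₂ * (P⁻¹ * B * (1 - C * (P + B * C)⁻¹ * B)) + D * (1 - C * (P + B * C)⁻¹ * B) := by
        simp only [Matrix.add_mul, Matrix.mul_assoc]
    _ = C₂ * ((P + B * C)⁻¹ * B) + (D - D * C * ((P + B * C)⁻¹ * B)) := by
        rw [inv_mul_mul_one_sub_mul_inv_add_mul_mul hP hQ]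
        simp only [Matrix.mul_sub, Matrix.mul_one, Matrix.mul_assoc]
    _ = (C₂ - D * C) * (P + B * C)⁻¹ * B + D := by
        rw [Matrix.mul_assoc (C₂ - D * C), Matrix.sub_mul]
        abel

end FeedbackFactorization

section Transcendental

variable {R K l m n : Type*} [CommRing R] [Fintype n] [DecidableEq n]

theorem det_smul_one_sub_map {S : Type*} [CommRing S] [Algebra R S] (A : Matrix n n R) (x : S) :
    (x • (1 : Matrix n n S) - A.map (algebraMap R S)).det = Polynomial.aeval x A.charpoly := by
  rw [Polynomial.aeval_def, Polynomial.eval₂_eq_eval_map, ← Matrix.charpoly_map,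
    Matrix.eval_charpoly, Matrix.scalar_apply, Matrix.smul_one_eq_diagonal]

variable [Field K] [Algebra R K] {x : K}

theorem isUnit_det_smul_one_sub_map (hx : Transcendental R x) (A : Matrix n n R) :
    IsUnit (x • (1 : Matrix n n K) - A.map (algebraMap R K)).det := by
  have : Nontrivial R := (algebraMap R K).domain_nontrivial
  rw [det_smul_one_sub_map, isUnit_iff_ne_zero]
  exact fun h ↦ A.charpoly_monic.ne_zero (transcendental_iff.mp hx _ h)

theorem controller_eq_KPhi_mul_Gamma_general [Fintype m] [DecidableEq m]
    (hx : Transcendental R x) (AΦ : Matrix n n R) (BΦ : Matrix n m R) (CΦ : Matrix m n R)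
    (C₂ : Matrix l n R) (D : Matrix l m R) :
    (C₂.map (algebraMap R K) - D.map (algebraMap R K) * CΦ.map (algebraMap R K)) *
        (x • (1 : Matrix n n K) - (AΦ.map (algebraMap R K) -
          BΦ.map (algebraMap R K) * CΦ.map (algebraMap R K)))⁻¹ * BΦ.map (algebraMap R K) +
      D.map (algebraMap R K) =
    (C₂.map (algebraMap R K) * (x • (1 : Matrix n n K) - AΦ.map (algebraMap R K))⁻¹ *
        BΦ.map (algebraMap R K) + D.map (algebraMap R K)) *
    ((1 : Matrix m m K) - CΦ.map (algebraMap R K) *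
        (x • (1 : Matrix n n K) - (AΦ.map (algebraMap R K) -
          BΦ.map (algebraMap R K) * CΦ.map (algebraMap R K)))⁻¹ * BΦ.map (algebraMap R K)) := by
  have open_loop := isUnit_det_smul_one_sub_map hx AΦ
  have closed_loop := isUnit_det_smul_one_sub_map hx (AΦ - BΦ * CΦ)
  rw [Matrix.map_sub _ (map_sub _), Matrix.map_mul, ← sub_add] at closed_loop
  rw [← sub_add]
  exact sub_mul_inv_add_mul_mul_add_eq_mul _ _ open_loop closed_loop

end Transcendental

/-- The optimal controller factorizes as `K* = K_Φ Γ`, where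
`K* = (C₂ − D C_Φ)(X·1 − (A_Φ − B_Φ C_Φ))⁻¹ B_Φ + D`,
`K_Φ = C₂ (X·1 − A_Φ)⁻¹ B_Φ + D`, and
`Γ = 1 − C_Φ (X·1 − (A_Φ − B_Φ C_Φ))⁻¹ B_Φ` is the differential filter. -/
theorem controller_eq_KPhi_mul_Gamma {F : Type*} [Field F] {N p q : ℕ}
    (AΦ : Matrix (Fin N) (Fin N) F) (BΦ : Matrix (Fin N) (Fin p) F)
    (CΦ : Matrix (Fin p) (Fin N) F) (C₂ : Matrix (Fin q) (Fin N) F)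
    (D : Matrix (Fin q) (Fin p) F) :
    (C₂.map RatFunc.C - D.map RatFunc.C * CΦ.map RatFunc.C) *
        ((RatFunc.X : RatFunc F) • (1 : Matrix (Fin N) (Fin N) (RatFunc F)) -
          (AΦ.map RatFunc.C - BΦ.map RatFunc.C * CΦ.map RatFunc.C))⁻¹ * BΦ.map RatFunc.C +
      D.map RatFunc.C =
    (C₂.map RatFunc.C *
        ((RatFunc.X : RatFunc F) • (1 : Matrix (Fin N) (Fin N) (RatFunc F)) -
          AΦ.map RatFunc.C)⁻¹ * BΦ.map RatFunc.C + D.map RatFunc.C) *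
    ((1 : Matrix (Fin p) (Fin p) (RatFunc F)) -
      CΦ.map RatFunc.C *
        ((RatFunc.X : RatFunc F) • (1 : Matrix (Fin N) (Fin N) (RatFunc F)) -
          (AΦ.map RatFunc.C - BΦ.map RatFunc.C * CΦ.map RatFunc.C))⁻¹ * BΦ.map RatFunc.C) :=
  controller_eq_KPhi_mul_Gamma_general RatFunc.transcendental_X AΦ BΦ CΦ C₂ D
end
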